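/- arXiv:2007.11482 — 3 statements merged into one kernel-verified Lean document; each statement's English description precedes it below -/
import Mathlib

section
/- Sharp threshold for template matching: in the template matching model with σ² = L/(α log L), if α > 2 then the error probability of the MAP estimator satisfies p_e → 0 as L → ∞, while if α < 2 then p_e → 1 as L → ∞. -/
open MeasureTheory ProbabilityTheory Filter
open scoped ENNReal

namespace MRAformal

/-- Standard Gaussian measure `N(0, I_L)` on `ℝ^L`. -/
noncomputable def stdGaussian (L : ℕ) : Measure (Fin L → ℝ) :=
  Measure.pi fun _ => gaussianReal 0 1

/-- Uniform distribution on `{0, …, L-1}`. -/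
noncomputable def unifFin (L : ℕ) : Measure (Fin L) :=
  ((L : ℝ≥0∞))⁻¹ • Measure.count

/-- Probability space for the template matching model: the template `X`, the uniform
shift `ℓ`, and the Gaussian noise `Z`. -/
noncomputable def tmBase (L : ℕ) : Measure ((Fin L → ℝ) × Fin L × (Fin L → ℝ)) :=
  (stdGaussian L).prod ((unifFin L).prod (stdGaussian L))

/-- The observation `Y = R_ℓ X + σ Z`, i.e. `Y_j = X_{j+ℓ} + σ Z_j`. -/
def tmY (L : ℕ) (σ : ℝ) (ω : (Fin L → ℝ) × Fin L × (Fin L → ℝ)) : Fin L → ℝ :=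
  fun j => ω.1 (j + ω.2.1) + σ * ω.2.2 j

/-- The correlation `⟨x, R_{ℓ'}⁻¹ y⟩ = ∑_j x_j y_{j-ℓ'}`. -/
def corr {L : ℕ} (x y : Fin L → ℝ) (ℓ' : Fin L) : ℝ :=
  ∑ j, x j * y (j - ℓ')

/-- Noise level such that `σ²(α) = L / (α log L)`. -/
noncomputable def sigmaAlpha (L : ℕ) (α : ℝ) : ℝ :=
  Real.sqrt ((L : ℝ) / (α * Real.log L))

instance (L : ℕ) : IsProbabilityMeasure (stdGaussian L) := by
  unfold stdGaussian; infer_instance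

lemma sg_map (L : ℕ) (i : Fin L) : (stdGaussian L).map (fun x => x i) = gaussianReal 0 1 :=
  (measurePreserving_eval (fun _ : Fin L => gaussianReal 0 1) i).map_eq

lemma sg_indep (L : ℕ) : iIndepFun (fun (i : Fin L) (x : Fin L → ℝ) => x i) (stdGaussian L) :=
  iIndepFun_pi (X := fun _ x => x) (fun _ => aemeasurable_id)

lemma subG_coord (L : ℕ) (i : Fin L) (c : ℝ) :
    HasSubgaussianMGF (fun x : Fin L → ℝ => c * x i) (⟨c ^ 2, sq_nonneg c⟩ * 1) (stdGaussian L) := by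
  apply HasSubgaussianMGF.const_mul
  have h : HasSubgaussianMGF (id : ℝ → ℝ) 1 (gaussianReal 0 1) := by
    refine ⟨fun t => by simpa using integrable_exp_mul_gaussianReal t, fun t => ?_⟩
    rw [mgf_id_gaussianReal]; simp
  rw [← sg_map L i] at h
  exact HasSubgaussianMGF.of_map (Y := fun x : Fin L → ℝ => x i)
    (measurable_pi_apply i).aemeasurable h

lemma chernoff {L : ℕ} (c : Fin L → ℝ) {V t : ℝ} (hV : 0 < V) (hc : ∑ i, c i ^ 2 ≤ V) (ht : 0 ≤ t) :
    stdGaussian L {z | t ≤ ∑ i, c i * z i} ≤ ENNReal.ofReal (Real.exp (-t ^ 2 / (2 * V))) := by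
  have hind : iIndepFun (fun (i : Fin L) (x : Fin L → ℝ) => c i * x i) (stdGaussian L) :=
    (sg_indep L).comp (fun i x => c i * x) (fun i => measurable_const_mul _)
  have h := HasSubgaussianMGF.sum_of_iIndepFun hind (s := Finset.univ)
    (fun i _ => subG_coord L i (c i))
  have h2 : HasSubgaussianMGF (fun x : Fin L → ℝ => ∑ i, c i * x i) ⟨V, hV.le⟩ (stdGaussian L) := by
    refine ⟨h.1, fun t => (h.2 t).trans ?_⟩
    apply Real.exp_le_exp.2
    have : ((∑ i, (⟨c i ^ 2, sq_nonneg _⟩ * 1 : NNReal) : NNReal) : ℝ) ≤ V := by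
      rw [NNReal.coe_sum]
      refine le_trans (le_of_eq (Finset.sum_congr rfl fun i _ => ?_)) hc
      change c i ^ 2 * (1 : ℝ) = _
      ring
    have h3 : (0:ℝ) ≤ t ^ 2 := sq_nonneg t
    have : ((∑ i, (⟨c i ^ 2, sq_nonneg _⟩ * 1 : NNReal) : NNReal) : ℝ) * t ^ 2 ≤ V * t ^ 2 := by gcongr
    change _ ≤ V * t ^ 2 / 2
    linarith
  have h4 := h2.measure_ge_le ht
  rw [← ENNReal.ofReal_toReal (measure_ne_top (stdGaussian L) _)]
  exact ENNReal.ofReal_le_ofReal h4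

lemma lintegral_prod_coord {L : ℕ} (f : Fin L → ℝ → ℝ≥0∞) (hf : ∀ i, Measurable (f i)) :
    ∫⁻ z, ∏ i, f i (z i) ∂(stdGaussian L) = ∏ i, ∫⁻ y, f i y ∂(gaussianReal 0 1) := by
  have hind := (sg_indep L).comp f hf
  have := lintegral_prod_eq_prod_lintegral_of_indepFun Finset.univ _ hind
    (fun i => (hf i).comp (measurable_pi_apply i))
  simp only [Function.comp_apply] at this
  rw [this]
  refine Finset.prod_congr rfl fun i _ => ?_
  rw [← sg_map L i, lintegral_map (hf i) (measurable_pi_apply i)]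

/-- one dimensional Cameron-Martin -/
lemma gauss_shift (u : ℝ) : (gaussianReal 0 1).map (fun y => y + u) =
    (gaussianReal 0 1).withDensity (fun y => ENNReal.ofReal (Real.exp (u * y - u ^ 2 / 2))) := by
  rw [gaussianReal_map_add_const, gaussianReal_of_var_ne_zero _ one_ne_zero,
    gaussianReal_of_var_ne_zero _ one_ne_zero, ← withDensity_mul _ (measurable_gaussianPDF _ _) (by fun_prop)]
  congr 1
  ext y
  simp only [gaussianPDF, gaussianPDFReal, Pi.mul_apply]
  rw [← ENNReal.ofReal_mul (by positivity), mul_assoc _ (Real.exp _) (Real.exp _), ← Real.exp_add]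
  congr 3
  simp; ring

lemma cameron_martin {L : ℕ} (u : Fin L → ℝ) :
    (stdGaussian L).map (fun z => fun i => z i + u i) =
    (stdGaussian L).withDensity
      (fun z => ∏ i, ENNReal.ofReal (Real.exp (u i * z i - u i ^ 2 / 2))) := by
  have h1 : (stdGaussian L).map (fun z => fun i => z i + u i) =
      Measure.pi (fun i => (gaussianReal 0 1).map (fun y => y + u i)) :=
    Measure.pi_map_pi (μ := fun _ => gaussianReal 0 1) (f := fun i y => y + u i)
      (hμ := fun i => by infer_instance) (fun i => by fun_prop)
  have hp : ∀ i, IsProbabilityMeasure ((gaussianReal 0 1).map (fun y => y + u i)) :=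
    fun i => Measure.isProbabilityMeasure_map (by fun_prop)
  rw [h1]
  apply Measure.pi_eq
  intro s hs
  rw [withDensity_apply _ (MeasurableSet.univ_pi hs), ← lintegral_indicator (MeasurableSet.univ_pi hs)]
  have : ∀ z : Fin L → ℝ, (Set.univ.pi s).indicator
      (fun z => ∏ i, ENNReal.ofReal (Real.exp (u i * z i - u i ^ 2 / 2))) z =
      ∏ i, (s i).indicator (fun y => ENNReal.ofReal (Real.exp (u i * y - u i ^ 2 / 2))) (z i) := by
    intro z
    by_cases hz : z ∈ Set.univ.pi s
    · rw [Set.indicator_of_mem hz]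
      refine Finset.prod_congr rfl fun i _ => ?_
      rw [Set.indicator_of_mem (hz i trivial)]
    · rw [Set.indicator_of_notMem hz]
      simp only [Set.mem_pi, Set.mem_univ, true_imp_iff, not_forall] at hz
      obtain ⟨i, hi⟩ := hz
      exact (Finset.prod_eq_zero (Finset.mem_univ i) (Set.indicator_of_notMem hi _)).symm
  simp_rw [this]
  rw [lintegral_prod_coord _ (fun i => Measurable.indicator (by fun_prop) (hs i))]
  refine Finset.prod_congr rfl fun i _ => ?_
  rw [gauss_shift, withDensity_apply _ (hs i), lintegral_indicator (hs i)]

lemma lint_exp_lin (s : ℝ) : ∫⁻ y, ENNReal.ofReal (Real.exp (s * y)) ∂(gaussianReal 0 1) =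
    ENNReal.ofReal (Real.exp (s ^ 2 / 2)) := by
  rw [← ofReal_integral_eq_lintegral_ofReal (integrable_exp_mul_gaussianReal s)
    (ae_of_all _ fun _ => (Real.exp_pos _).le)]
  congr 1
  have := congrFun (mgf_id_gaussianReal (μ := 0) (v := 1)) s
  simpa [mgf] using this

lemma lint_exp_sq (w : ℝ) (hw0 : 0 ≤ w) (hw : w ≤ 1 / 2) :
    ∫⁻ y, ENNReal.ofReal (Real.exp (w * y ^ 2 / 2)) ∂(gaussianReal 0 1) ≤
    ENNReal.ofReal (Real.exp w) := by
  rw [gaussianReal_of_var_ne_zero _ one_ne_zero,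
    lintegral_withDensity_eq_lintegral_mul _ (measurable_gaussianPDF _ _) (by fun_prop)]
  have h : ∀ y : ℝ, (gaussianPDF 0 1 * fun y => ENNReal.ofReal (Real.exp (w * y ^ 2 / 2))) y =
      ENNReal.ofReal ((√(2 * Real.pi))⁻¹ * Real.exp (-((1 - w) / 2) * y ^ 2)) := by
    intro y
    simp only [gaussianPDF, gaussianPDFReal, Pi.mul_apply]
    rw [← ENNReal.ofReal_mul (by positivity), mul_assoc _ (Real.exp _) (Real.exp _), ← Real.exp_add]
    congr 3
    · simp
    · simp; ring
  simp_rw [h]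
  have hb : 0 < (1 - w) / 2 := by linarith
  rw [← ofReal_integral_eq_lintegral_ofReal ((integrable_exp_neg_mul_sq hb).const_mul _)
    (ae_of_all _ fun _ => by positivity), integral_const_mul, integral_gaussian]
  apply ENNReal.ofReal_le_ofReal
  rw [← Real.sqrt_inv, ← Real.sqrt_mul (by positivity)]
  apply Real.sqrt_le_iff.2 ⟨(Real.exp_pos _).le, ?_⟩
  have hpi := Real.pi_pos
  have e1 : (2 * Real.pi)⁻¹ * (Real.pi / ((1 - w) / 2)) = 1 / (1 - w) := by
    have : 1 - w ≠ 0 := by linarith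
    field_simp
  rw [e1, div_le_iff₀ (by linarith), ← Real.exp_nat_mul]
  have e2 : 1 + 2 * w ≤ Real.exp ((2 : ℕ) * w) := by
    have := Real.add_one_le_exp ((2 : ℕ) * w); push_cast at *; linarith
  have : (1 + 2 * w) * (1 - w) ≤ Real.exp ((2 : ℕ) * w) * (1 - w) := by
    apply mul_le_mul_of_nonneg_right e2; linarith
  nlinarith

lemma lint_pair {L : ℕ} (lam : ℝ) (hl : lam ^ 2 ≤ 1 / 2) {i j : Fin L} (hij : i ≠ j) :
    ∫⁻ x, ENNReal.ofReal (Real.exp (lam * (x i * x j))) ∂(stdGaussian L) ≤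
      ENNReal.ofReal (Real.exp (lam ^ 2)) := by
  have hI := (sg_indep L).indepFun hij
  rw [indepFun_iff_map_prod_eq_prod_map_map (measurable_pi_apply i).aemeasurable
    (measurable_pi_apply j).aemeasurable, sg_map, sg_map] at hI
  have h1 : ∫⁻ x, ENNReal.ofReal (Real.exp (lam * (x i * x j))) ∂(stdGaussian L) =
      ∫⁻ p : ℝ × ℝ, ENNReal.ofReal (Real.exp (lam * (p.1 * p.2)))
        ∂((stdGaussian L).map (fun x => (x i, x j))) := by
    rw [lintegral_map (by fun_prop) (by fun_prop)]
  rw [h1, hI, lintegral_prod _ (by fun_prop)]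
  have h2 : ∀ a : ℝ, ∫⁻ b, ENNReal.ofReal (Real.exp (lam * (a * b))) ∂(gaussianReal 0 1) =
      ENNReal.ofReal (Real.exp (lam ^ 2 * a ^ 2 / 2)) := by
    intro a
    simp_rw [← mul_assoc]
    rw [lint_exp_lin, mul_pow]
  simp only [h2]
  exact lint_exp_sq _ (sq_nonneg _) hl

lemma lint_matching {L : ℕ} (lam : ℝ) (hl : lam ^ 2 ≤ 1 / 2) (f : Fin L → Fin L)
    (hf : Function.Injective f) (B : Finset (Fin L)) (hB : ∀ i ∈ B, ∀ j ∈ B, i ≠ f j) :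
    ∫⁻ x, ∏ i ∈ B, ENNReal.ofReal (Real.exp (lam * (x i * x (f i)))) ∂(stdGaussian L) ≤
      ENNReal.ofReal (Real.exp (lam ^ 2)) ^ B.card := by
  classical
  induction B using Finset.induction_on with
  | empty => simp
  | insert k B hk ih =>
    have ih' := ih (fun i hi j hj => hB i (Finset.mem_insert_of_mem hi) j (Finset.mem_insert_of_mem hj))
    have hkf : k ≠ f k := hB k (Finset.mem_insert_self _ _) k (Finset.mem_insert_self _ _)
    have hdis : Disjoint ({k, f k} : Finset (Fin L)) (B ∪ B.image f) := by
      rw [Finset.disjoint_left]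
      intro a ha hb
      simp only [Finset.mem_insert, Finset.mem_singleton, Finset.mem_union, Finset.mem_image] at ha hb
      rcases ha with rfl | rfl
      · rcases hb with hb | ⟨j, hj, hj'⟩
        · exact hk hb
        · exact hB a (Finset.mem_insert_self _ _) j (Finset.mem_insert_of_mem hj) hj'.symm
      · rcases hb with hb | ⟨j, hj, hj'⟩
        · exact hB _ (Finset.mem_insert_of_mem hb) k (Finset.mem_insert_self _ _) rfl
        · rw [hf hj'] at hj; exact hk hj
    have hI := (sg_indep L).indepFun_finset _ _ hdis (fun i => measurable_pi_apply i)
    have hI2 := hI.comp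
      (φ := fun v : ({k, f k} : Finset (Fin L)) → ℝ => ENNReal.ofReal (Real.exp (lam * (v ⟨k, by simp⟩ * v ⟨f k, by simp⟩))))
      (ψ := fun v : ((B ∪ B.image f : Finset (Fin L))) → ℝ => ∏ i : B, ENNReal.ofReal (Real.exp (lam *
        (v ⟨i, Finset.mem_union_left _ i.2⟩ *
          v ⟨f i, Finset.mem_union_right _ (Finset.mem_image_of_mem _ i.2)⟩))))
      (by fun_prop) (by fun_prop)
    have := lintegral_mul_eq_lintegral_mul_lintegral_of_indepFun'' (by fun_prop) (by fun_prop) hI2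
    simp only [Function.comp_apply] at this
    have hpr : ∀ x : Fin L → ℝ, ∏ i : B, ENNReal.ofReal (Real.exp (lam * (x i * x (f i)))) =
        ∏ i ∈ B, ENNReal.ofReal (Real.exp (lam * (x i * x (f i)))) := fun x =>
      Finset.prod_coe_sort B (fun i => ENNReal.ofReal (Real.exp (lam * (x i * x (f i)))))
    simp only [hpr] at this
    simp_rw [Finset.prod_insert hk]
    rw [this, Finset.card_insert_of_notMem hk, pow_succ, mul_comm]
    exact mul_le_mul' ih' (lint_pair lam hl hkf)

lemma matching_tail {L : ℕ} (lam t : ℝ) (hl0 : 0 ≤ lam) (hl : lam ^ 2 ≤ 1 / 2) (f : Fin L → Fin L)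
    (hf : Function.Injective f) (B : Finset (Fin L)) (hB : ∀ i ∈ B, ∀ j ∈ B, i ≠ f j) :
    stdGaussian L {x | t ≤ ∑ i ∈ B, x i * x (f i)} ≤
      ENNReal.ofReal (Real.exp (lam ^ 2 * L - lam * t)) := by
  have h1 : stdGaussian L {x | t ≤ ∑ i ∈ B, x i * x (f i)} ≤
      ∫⁻ x, ENNReal.ofReal (Real.exp (-lam * t)) *
        ∏ i ∈ B, ENNReal.ofReal (Real.exp (lam * (x i * x (f i)))) ∂(stdGaussian L) := by
    have hm : MeasurableSet {x : Fin L → ℝ | t ≤ ∑ i ∈ B, x i * x (f i)} :=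
      measurableSet_le measurable_const (by fun_prop)
    rw [← lintegral_indicator_one hm]
    apply lintegral_mono
    intro x
    by_cases hx : x ∈ {x : Fin L → ℝ | t ≤ ∑ i ∈ B, x i * x (f i)}
    · rw [Set.indicator_of_mem hx]
      simp only [Pi.one_apply]
      rw [← ENNReal.ofReal_prod_of_nonneg (fun _ _ => (Real.exp_pos _).le), ← Real.exp_sum,
        ← ENNReal.ofReal_mul (Real.exp_pos _).le, ← Real.exp_add, ← Finset.mul_sum,
        ← ENNReal.ofReal_one]
      apply ENNReal.ofReal_le_ofReal
      apply Real.one_le_exp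
      have := mul_le_mul_of_nonneg_left hx hl0
      linarith
    · rw [Set.indicator_of_notMem hx]; exact zero_le
  refine h1.trans ?_
  rw [lintegral_const_mul _ (by fun_prop)]
  calc _ ≤ ENNReal.ofReal (Real.exp (-lam * t)) * ENNReal.ofReal (Real.exp (lam ^ 2)) ^ B.card := by
        gcongr; exact lint_matching lam hl f hf B hB
    _ = ENNReal.ofReal (Real.exp (lam ^ 2 * B.card - lam * t)) := by
        rw [← ENNReal.ofReal_pow (Real.exp_pos _).le, ← Real.exp_nat_mul,
          ← ENNReal.ofReal_mul (Real.exp_pos _).le, ← Real.exp_add]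
        congr 2; ring
    _ ≤ _ := by
        apply ENNReal.ofReal_le_ofReal
        apply Real.exp_le_exp.2
        have : (B.card : ℝ) ≤ L := by
          have := Finset.card_le_univ B
          rw [Fintype.card_fin] at this
          exact_mod_cast this
        have := mul_le_mul_of_nonneg_left this (sq_nonneg lam)
        linarith

/-- proper four-coloring of shift graph -/
lemma shift_coloring {L : ℕ} (d : Fin L) (hd : d.val ≠ 0) :
    ∃ c : Fin L → Fin 4, ∀ i j, c i = c j → i ≠ j - d := by
  have hdL := d.2
  refine ⟨fun j => if d.val ≤ j.val then ⟨(j.val / d.val) % 2, by omega⟩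
    else ⟨2 + (j.val / (L - d.val)) % 2, by omega⟩, ?_⟩
  intro i j hc hij
  have hv : i.val = (L - d.val + j.val) % L := by rw [hij, Fin.sub_def]
  have hj := j.2
  by_cases h : d.val ≤ j.val
  · have hv2 : j.val = i.val + d.val := by
      rw [show L - d.val + j.val = (j.val - d.val) + L by omega, Nat.add_mod_right,
        Nat.mod_eq_of_lt (by omega)] at hv
      omega
    by_cases h' : d.val ≤ i.val
    · simp only [h, h', if_true, Fin.mk.injEq] at hc
      rw [hv2, Nat.add_div_right _ (by omega)] at hc
      omega
    · simp only [h, h', if_true, if_false, Fin.mk.injEq] at hc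
      omega
  · have hv2 : i.val = j.val + (L - d.val) := by
      rw [Nat.mod_eq_of_lt (by omega)] at hv
      omega
    by_cases h' : d.val ≤ i.val
    · simp only [h, h', if_true, if_false, Fin.mk.injEq] at hc
      omega
    · simp only [h, h', if_false, Fin.mk.injEq] at hc
      rw [hv2, Nat.add_div_right _ (by omega)] at hc
      omega

lemma autocorr_tail {L : ℕ} (lam t : ℝ) (hl0 : 0 ≤ lam) (hl : lam ^ 2 ≤ 1 / 2) (d : Fin L)
    (hd : d.val ≠ 0) :
    stdGaussian L {x | 4 * t ≤ ∑ i, x i * x (i - d)} ≤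
      4 * ENNReal.ofReal (Real.exp (lam ^ 2 * L - lam * t)) := by
  obtain ⟨c, hc⟩ := shift_coloring d hd
  have : NeZero L := ⟨by have := d.2; omega⟩
  have hsub : {x : Fin L → ℝ | 4 * t ≤ ∑ i, x i * x (i - d)} ⊆
      ⋃ a : Fin 4, {x | t ≤ ∑ i ∈ Finset.univ.filter (fun i => c i = a), x i * x (i - d)} := by
    intro x hx
    by_contra hcon
    simp only [Set.mem_iUnion, Set.mem_ofPred_eq, not_exists, not_le] at hcon hx
    rw [← Finset.sum_fiberwise (s := Finset.univ) (g := c)] at hx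
    have := Finset.sum_lt_sum_of_nonempty (s := (Finset.univ : Finset (Fin 4))) Finset.univ_nonempty
      (fun a _ => hcon a)
    simp only [Finset.sum_const, Finset.card_univ, Fintype.card_fin, nsmul_eq_mul] at this
    push_cast at this
    linarith
  refine (measure_mono hsub).trans ((measure_iUnion_le _).trans ?_)
  rw [tsum_fintype]
  calc _ ≤ ∑ a : Fin 4, ENNReal.ofReal (Real.exp (lam ^ 2 * L - lam * t)) := by
        refine Finset.sum_le_sum fun a _ => ?_
        refine matching_tail lam t hl0 hl (fun i => i - d) (sub_left_injective) _ ?_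
        intro i hi j hj
        simp only [Finset.mem_filter] at hi hj
        exact hc i j (hi.2.trans hj.2.symm)
    _ = _ := by simp

lemma norm_conc : ∃ V : ℝ, 0 ≤ V ∧ ∀ (L : ℕ) (e : ℝ), 0 < e → 0 < L →
    stdGaussian L {x | e * L ≤ |∑ i, x i ^ 2 - L|} ≤ ENNReal.ofReal (V / (e ^ 2 * L)) := by
  have hmem : MemLp (fun y : ℝ => y ^ 2) 2 (gaussianReal 0 1) := by
    have h4 := memLp_id_gaussianReal (μ := 0) (v := 1) 4
    have := h4.norm_rpow_div 2
    refine (memLp_congr_ae (ae_of_all _ fun y => ?_)).1 (by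
      convert this using 2
      rw [show ((4 : NNReal) : ℝ≥0∞) = 2 * 2 by norm_num]
      rw [ENNReal.mul_div_cancel_right] <;> norm_num)
    simp
  have hexp : ∫ y, y ^ 2 ∂(gaussianReal 0 1) = 1 := by
    have h := variance_id_gaussianReal (μ := 0) (v := 1)
    rw [variance_of_integral_eq_zero aemeasurable_id (by simp)] at h
    simpa using h
  refine ⟨Var[fun y : ℝ => y ^ 2; gaussianReal 0 1], variance_nonneg _ _, fun L e he hL => ?_⟩
  have hL' : (0:ℝ) < L := by exact_mod_cast hL
  have hvar := variance_sum_pi (μ := fun _ : Fin L => gaussianReal 0 1) (X := fun _ y => y ^ 2)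
    (fun _ => hmem)
  have hmemi : ∀ i : Fin L, MemLp (fun x : Fin L → ℝ => x i ^ 2) 2 (stdGaussian L) := fun i =>
    hmem.comp_measurePreserving (measurePreserving_eval (fun _ : Fin L => gaussianReal 0 1) i)
  have hms : MemLp (∑ i, fun x : Fin L → ℝ => x i ^ 2) 2 (stdGaussian L) :=
    memLp_finsetSum' _ fun i _ => hmemi i
  have hE : ∫ x, (∑ i, fun x : Fin L → ℝ => x i ^ 2) x ∂(stdGaussian L) = L := by
    simp only [Finset.sum_apply]
    rw [integral_finsetSum _ (fun i _ => (hmemi i).integrable (by norm_num))]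
    have : ∀ i : Fin L, ∫ x, x i ^ 2 ∂(stdGaussian L) = 1 := by
      intro i
      rw [← hexp, ← sg_map L i, integral_map (measurable_pi_apply i).aemeasurable (by fun_prop)]
    simp [this]
  have := meas_ge_le_variance_div_sq hms (c := e * L) (by positivity)
  rw [hE] at this
  simp only [Finset.sum_apply] at this
  refine this.trans (ENNReal.ofReal_le_ofReal (le_of_eq ?_))
  have hvar' : Var[∑ i, fun x : Fin L → ℝ => x i ^ 2; stdGaussian L] =
    L * Var[fun y : ℝ => y ^ 2; gaussianReal 0 1] := by
    refine hvar.trans ?_; simp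
  rw [hvar']
  field_simp

instance (k : ℕ) : IsProbabilityMeasure (unifFin (k + 1)) := by
  constructor
  simp only [unifFin, Measure.smul_apply, smul_eq_mul, Measure.count_univ, ENat.card_eq_coe_fintype_card,
    Fintype.card_fin]
  exact ENNReal.inv_mul_cancel (by simp) (by simp)

instance (k : ℕ) : IsProbabilityMeasure (tmBase (k + 1)) := by
  unfold tmBase; infer_instance

lemma tm_bound {k : ℕ} (S : Set ((Fin (k+1) → ℝ) × Fin (k+1) × (Fin (k+1) → ℝ)))
    (hS : MeasurableSet S) (Bx : Set (Fin (k+1) → ℝ)) (b : ℝ≥0∞)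
    (h : ∀ x ∉ Bx, ((k + 1 : ℕ) : ℝ≥0∞)⁻¹ * ∑ l, stdGaussian (k+1) {z | (x, l, z) ∈ S} ≤ b) :
    tmBase (k+1) S ≤ stdGaussian (k+1) Bx + b := by
  unfold tmBase
  rw [Measure.prod_apply hS]
  have hin : ∀ x, ((unifFin (k+1)).prod (stdGaussian (k+1))) (Prod.mk x ⁻¹' S) =
      ((k + 1 : ℕ) : ℝ≥0∞)⁻¹ * ∑ l, stdGaussian (k+1) {z | (x, l, z) ∈ S} := by
    intro x
    rw [Measure.prod_apply (measurable_prodMk_left hS)]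
    unfold unifFin
    rw [lintegral_smul_measure, lintegral_count, tsum_fintype]
    rfl
  calc _ ≤ ∫⁻ x, ((toMeasurable (stdGaussian (k+1)) Bx).indicator 1 x + b) ∂(stdGaussian (k+1)) := by
        apply lintegral_mono
        intro x
        by_cases hx : x ∈ toMeasurable (stdGaussian (k+1)) Bx
        · simp only [Set.indicator_of_mem hx, Pi.one_apply]
          exact prob_le_one.trans le_self_add
        · have hx' : x ∉ Bx := fun h => hx (subset_toMeasurable _ _ h)
          simp only [hin]
          exact (h x hx').trans le_add_self
    _ = _ := by
        rw [lintegral_add_right _ measurable_const, lintegral_indicator_one (measurableSet_toMeasurable _ _),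
          measure_toMeasurable]
        simp

/-- atypical templates -/
def badX (L : ℕ) (e : ℝ) : Set (Fin L → ℝ) :=
  {x | e * L ≤ |∑ i, x i ^ 2 - L|} ∪
    ⋃ d : Fin L, {x | d.val ≠ 0 ∧ e * L ≤ ∑ i, x i * x (i - d)}

lemma badX_tendsto (e : ℝ) (he : 0 < e) (he1 : e < 1) :
    Tendsto (fun k : ℕ => stdGaussian (k+1) (badX (k+1) e)) atTop (nhds 0) := by
  obtain ⟨V, hV0, hV⟩ := norm_conc
  have hb : ∀ k : ℕ, stdGaussian (k+1) (badX (k+1) e) ≤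
      ENNReal.ofReal (V / (e ^ 2 * ((k+1 : ℕ) : ℝ))) +
      ENNReal.ofReal (4 * (((k+1 : ℕ) : ℝ) * Real.exp (-(e ^ 2 / 64) * ((k+1 : ℕ) : ℝ)))) := by
    intro k
    refine (measure_union_le _ _).trans (add_le_add (hV _ e he (Nat.succ_pos k)) ?_)
    refine (measure_iUnion_le _).trans ?_
    rw [tsum_fintype]
    calc _ ≤ ∑ d : Fin (k+1), 4 * ENNReal.ofReal (Real.exp (-(e ^ 2 / 64) * ((k+1 : ℕ) : ℝ))) := by
          refine Finset.sum_le_sum fun d _ => ?_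
          by_cases hd : d.val = 0
          · simp [hd]
          · have := autocorr_tail (L := k+1) (e / 8) (e / 4 * ((k+1 : ℕ) : ℝ)) (by positivity)
              (by nlinarith) d hd
            simp only [ne_eq, hd, not_false_eq_true, true_and]
            rw [show 4 * (e / 4 * ((k+1 : ℕ) : ℝ)) = e * ((k+1 : ℕ) : ℝ) by ring,
              show (e / 8) ^ 2 * ((k+1 : ℕ) : ℝ) - e / 8 * (e / 4 * ((k+1 : ℕ) : ℝ)) =
                -(e ^ 2 / 64) * ((k+1 : ℕ) : ℝ) by ring] at this
            exact this
      _ = _ := by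
          simp only [Finset.sum_const, Finset.card_univ, Fintype.card_fin, nsmul_eq_mul]
          rw [ENNReal.ofReal_mul (by norm_num), ENNReal.ofReal_mul (by positivity),
            ENNReal.ofReal_natCast]
          norm_num
          ring
  refine tendsto_of_tendsto_of_tendsto_of_le_of_le tendsto_const_nhds ?_ (fun _ => zero_le) hb
  have hN : Tendsto (fun k : ℕ => ((k+1 : ℕ) : ℝ)) atTop atTop :=
    tendsto_natCast_atTop_atTop.comp (tendsto_add_atTop_nat 1)
  have h1 : Tendsto (fun k : ℕ => V / (e ^ 2 * ((k+1 : ℕ) : ℝ))) atTop (nhds 0) :=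
    (hN.const_mul_atTop (by positivity)).const_div_atTop V
  have h2 : Tendsto (fun k : ℕ => 4 * (((k+1 : ℕ) : ℝ) * Real.exp (-(e ^ 2 / 64) * ((k+1 : ℕ) : ℝ))))
      atTop (nhds 0) := by
    have h := (tendsto_rpow_mul_exp_neg_mul_atTop_nhds_zero 1 (e ^ 2 / 64) (by positivity)).comp hN
    simpa [Function.comp_def] using h.const_mul 4
  simpa using (ENNReal.tendsto_ofReal h1).add (ENNReal.tendsto_ofReal h2)

lemma exp_log_tendsto (c : ℝ) (hc : c < 0) :
    Tendsto (fun k : ℕ => ENNReal.ofReal (Real.exp (c * Real.log ((k+1 : ℕ) : ℝ)))) atTop (nhds 0) := by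
  have hN : Tendsto (fun k : ℕ => ((k+1 : ℕ) : ℝ)) atTop atTop :=
    tendsto_natCast_atTop_atTop.comp (tendsto_add_atTop_nat 1)
  have := (Real.tendsto_exp_atBot.comp ((Real.tendsto_log_atTop.comp hN).const_mul_atTop_of_neg hc))
  simpa using ENNReal.tendsto_ofReal this

lemma corr_tmY {k : ℕ} (s : ℝ) (x z : Fin (k+1) → ℝ) (l l' : Fin (k+1)) :
    corr x (tmY (k+1) s (x, l, z)) l' =
      ∑ i, x i * x (i - (l' - l)) + s * ∑ i, x (i + l') * z i := by
  unfold corr tmY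
  simp only [mul_add, Finset.sum_add_distrib]
  congr 1
  · refine Finset.sum_congr rfl fun i _ => ?_
    congr 2; abel
  · rw [Finset.mul_sum, ← Equiv.sum_comp (Equiv.addRight l')]
    refine Finset.sum_congr rfl fun i _ => ?_
    simp; ring

lemma sum_shift_sq {k : ℕ} (x : Fin (k+1) → ℝ) (l : Fin (k+1)) :
    ∑ i, x (i + l) ^ 2 = ∑ i, x i ^ 2 :=
  Equiv.sum_comp (Equiv.addRight l) (fun i => x i ^ 2)

lemma sigma_facts {L : ℕ} (hL : 2 ≤ L) {α : ℝ} (hα : 0 < α) :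
    0 < sigmaAlpha L α ∧ sigmaAlpha L α ^ 2 * (α * Real.log L) = L := by
  have h1 : 0 < Real.log L := Real.log_pos (by exact_mod_cast hL)
  have h2 : (0:ℝ) < L := by positivity
  unfold sigmaAlpha
  refine ⟨Real.sqrt_pos.2 (by positivity), ?_⟩
  rw [Real.sq_sqrt (by positivity)]
  field_simp

lemma alg1 {s α lg N q e : ℝ} (hs : 0 < s) (hα : 0 < α) (hlg : 0 < lg) (he : 0 < e)
    (h : s ^ 2 * (α * lg) = N) :
    -(q * N / s) ^ 2 / (2 * ((1 + e) * N)) = -(q ^ 2 * α / (2 * (1 + e))) * lg := by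
  subst h
  field_simp

lemma alg2 {s α lg N e : ℝ} (hs : 0 < s) (hα : 0 < α) (hlg : 0 < lg) (he : 0 < e)
    (h : s ^ 2 * (α * lg) = N) :
    -(s * (e * lg)) ^ 2 / (2 * ((1 + e) * N)) = -(e ^ 2 / (2 * (1 + e) * α)) * lg := by
  subst h
  field_simp

lemma upper_fixed {k : ℕ} (hk : 1 ≤ k) {α e : ℝ} (hα : 0 < α) (he : 0 < e) (he1 : e < 1 / 3)
    (est : ((Fin (k + 1) → ℝ) × (Fin (k + 1) → ℝ)) → Fin (k + 1))
    (hmax : ∀ (x y : Fin (k + 1) → ℝ) (ℓ' : Fin (k + 1)),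
      corr x y ℓ' ≤ corr x y (est (x, y)))
    (x : Fin (k+1) → ℝ) (hx : x ∉ badX (k+1) e) (l : Fin (k+1)) :
    stdGaussian (k+1) {z | est (x, tmY (k + 1) (sigmaAlpha (k + 1) α) (x, l, z)) ≠ l} ≤
      ENNReal.ofReal (Real.exp (-(e ^ 2 * α / (2 * (1 + e))) * Real.log ((k+1 : ℕ) : ℝ))) +
      ENNReal.ofReal (Real.exp ((1 - (1 - 3 * e) ^ 2 * α / (2 * (1 + e))) * Real.log ((k+1 : ℕ) : ℝ))) := by
  obtain ⟨hσ, hσ2⟩ := sigma_facts (L := k+1) (by omega) hα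
  set s := sigmaAlpha (k+1) α with hs
  set N : ℝ := ((k+1 : ℕ) : ℝ) with hN
  have hN0 : 0 < N := by positivity
  have hlog : 0 < Real.log N := Real.log_pos (by rw [hN]; exact_mod_cast (by omega : 1 < k+1))
  simp only [badX, Set.mem_union, Set.mem_iUnion, Set.mem_ofPred_eq, not_or, not_exists, not_and, not_le] at hx
  obtain ⟨hx1, hx2⟩ := hx
  rw [← hN] at hx1 hx2
  rw [abs_lt] at hx1
  have hsub : {z | est (x, tmY (k + 1) s (x, l, z)) ≠ l} ⊆
      {z | e * N / s ≤ ∑ i, (-x (i + l)) * z i} ∪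
      ⋃ l' : Fin (k+1), {z | (1 - 3 * e) * N / s ≤ ∑ i, x (i + l') * z i} := by
    intro z hz
    by_contra hcon
    simp only [Set.mem_union, Set.mem_iUnion, Set.mem_ofPred_eq, not_or, not_exists, not_le] at hcon hz
    obtain ⟨c1, c2⟩ := hcon
    have hm := hmax x (tmY (k + 1) s (x, l, z)) l
    set l' := est (x, tmY (k + 1) s (x, l, z)) with hl'
    rw [corr_tmY, corr_tmY] at hm
    have c2' := c2 l'
    have hd : (l' - l).val ≠ 0 := by
      intro h0
      apply hz
      have : l' - l = 0 := Fin.ext h0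
      exact sub_eq_zero.1 this
    have hA := hx2 _ hd
    rw [lt_div_iff₀ hσ] at c1 c2'
    simp only [neg_mul, Finset.sum_neg_distrib, sub_self, sub_zero] at c1 hm
    have : ∑ i, x i * x i = ∑ i, x i ^ 2 := Finset.sum_congr rfl fun i _ => by ring
    rw [this] at hm
    nlinarith
  refine (measure_mono hsub).trans ((measure_union_le _ _).trans (add_le_add ?_ ?_))
  · refine (chernoff (V := (1 + e) * N) _ (by positivity) ?_ (by positivity)).trans
      (ENNReal.ofReal_le_ofReal (Real.exp_le_exp.2 (le_of_eq ?_)))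
    · simp only [neg_sq, sum_shift_sq]; linarith [hx1.2]
    · exact alg1 hσ hα hlog he hσ2
  · refine (measure_iUnion_le _).trans ?_
    rw [tsum_fintype]
    have hch : ∀ l' : Fin (k+1), stdGaussian (k+1) {z | (1 - 3 * e) * N / s ≤ ∑ i, x (i + l') * z i} ≤
        ENNReal.ofReal (Real.exp (-((1 - 3 * e) ^ 2 * α / (2 * (1 + e))) * Real.log N)) := by
      intro l'
      have h3 : 0 < 1 - 3 * e := by linarith
      refine (chernoff (V := (1 + e) * N) _ (by positivity) ?_ (by positivity)).trans
        (ENNReal.ofReal_le_ofReal (Real.exp_le_exp.2 (le_of_eq ?_)))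
      · simp only [sum_shift_sq]; linarith [hx1.2]
      · exact alg1 hσ hα hlog he hσ2
    refine (Finset.sum_le_sum fun l' _ => hch l').trans (le_of_eq ?_)
    simp only [Finset.sum_const, Finset.card_univ, Fintype.card_fin, nsmul_eq_mul]
    rw [← ENNReal.ofReal_natCast, ← ENNReal.ofReal_mul (by positivity)]
    congr 1
    rw [sub_mul, one_mul, sub_eq_add_neg (Real.log N), Real.exp_add, Real.exp_log hN0, neg_mul]

lemma lower_fixed {k : ℕ} (hk : 1 ≤ k) {α e : ℝ} (hα : 0 < α) (he : 0 < e)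
    (est : ((Fin (k + 1) → ℝ) × (Fin (k + 1) → ℝ)) → Fin (k + 1)) (hmeas : Measurable est)
    (x : Fin (k+1) → ℝ) (hx : x ∉ badX (k+1) e) :
    ((k + 1 : ℕ) : ℝ≥0∞)⁻¹ *
      ∑ l, stdGaussian (k+1) {z | est (x, tmY (k + 1) (sigmaAlpha (k + 1) α) (x, l, z)) = l} ≤
      ENNReal.ofReal (Real.exp (-(e ^ 2 / (2 * (1 + e) * α)) * Real.log ((k+1 : ℕ) : ℝ))) +
      ENNReal.ofReal (Real.exp (((1 + e) * α / 2 + e - 1) * Real.log ((k+1 : ℕ) : ℝ))) := by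
  obtain ⟨hσ, hσ2⟩ := sigma_facts (L := k+1) (by omega) hα
  set s := sigmaAlpha (k+1) α with hs
  set N : ℝ := ((k+1 : ℕ) : ℝ) with hN
  have hN0 : 0 < N := by positivity
  have hlog : 0 < Real.log N := Real.log_pos (by rw [hN]; exact_mod_cast (by omega : 1 < k+1))
  simp only [badX, Set.mem_union, Set.mem_iUnion, Set.mem_ofPred_eq, not_or, not_exists, not_and, not_le] at hx
  obtain ⟨hx1, -⟩ := hx
  rw [← hN] at hx1
  rw [abs_lt] at hx1
  set K : ℝ := ((1 + e) * α / 2 + e) * Real.log N with hK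
  let g : (Fin (k+1) → ℝ) → Fin (k+1) := fun w => est (x, fun i => s * w i)
  have hg : Measurable g := hmeas.comp (by fun_prop)
  have key : ∀ l, stdGaussian (k+1) {z | est (x, tmY (k + 1) s (x, l, z)) = l} ≤
      ENNReal.ofReal (Real.exp (-(e ^ 2 / (2 * (1 + e) * α)) * Real.log N)) +
      ENNReal.ofReal (Real.exp K) * stdGaussian (k+1) (g ⁻¹' {l}) := by
    intro l
    let u : Fin (k+1) → ℝ := fun i => x (i + l) / s
    let H : Set (Fin (k+1) → ℝ) := {w | ∑ i, (u i * w i - u i ^ 2 / 2) ≤ K}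
    have hH : MeasurableSet H := measurableSet_le (by fun_prop) measurable_const
    have hu2 : ∑ i, u i ^ 2 ≤ (1 + e) * (α * Real.log N) := by
      have : ∑ i, u i ^ 2 = (∑ i, x i ^ 2) / s ^ 2 := by
        rw [← sum_shift_sq x l, Finset.sum_div]
        exact Finset.sum_congr rfl fun i _ => div_pow _ _ _
      rw [this, div_le_iff₀ (by positivity)]
      have : (1 + e) * (α * Real.log N) * s ^ 2 = (1 + e) * N := by linear_combination (1 + e) * hσ2
      rw [this]; linarith [hx1.2]
    have hsub : {z | est (x, tmY (k + 1) s (x, l, z)) = l} ⊆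
        {z | s * (e * Real.log N) ≤ ∑ i, x (i + l) * z i} ∪
        (fun z : Fin (k+1) → ℝ => fun i => z i + u i) ⁻¹' (g ⁻¹' {l} ∩ H) := by
      intro z hz
      by_cases h1 : s * (e * Real.log N) ≤ ∑ i, x (i + l) * z i
      · exact Or.inl h1
      · refine Or.inr ⟨?_, ?_⟩
        · simp only [Set.mem_preimage, Set.mem_singleton_iff, g]
          rw [Set.mem_ofPred_eq] at hz
          have : (fun i => s * (z i + u i)) = tmY (k + 1) s (x, l, z) := by
            funext i
            simp only [tmY, u]
            field_simp
            ring
          rw [this]; exact hz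
        · change ∑ i, (u i * (z i + u i) - u i ^ 2 / 2) ≤ K
          have e1 : ∑ i, (u i * (z i + u i) - u i ^ 2 / 2) =
              (∑ i, x (i + l) * z i) / s + (∑ i, u i ^ 2) / 2 := by
            rw [Finset.sum_div, Finset.sum_div, ← Finset.sum_add_distrib]
            refine Finset.sum_congr rfl fun i _ => ?_
            simp only [u]; ring
          have e2 : (∑ i, x (i + l) * z i) / s ≤ e * Real.log N := by
            rw [div_le_iff₀ hσ]; linarith
          rw [e1, hK]; linarith
    refine (measure_mono hsub).trans ((measure_union_le _ _).trans (add_le_add ?_ ?_))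
    · refine (chernoff (V := (1 + e) * N) _ (by positivity) ?_ (by positivity)).trans
        (ENNReal.ofReal_le_ofReal (Real.exp_le_exp.2 (le_of_eq ?_)))
      · simp only [sum_shift_sq]; linarith [hx1.2]
      · exact alg2 hσ hα hlog he hσ2
    · have hGH : MeasurableSet (g ⁻¹' {l} ∩ H) := (hg (measurableSet_singleton l)).inter hH
      rw [← Measure.map_apply (by fun_prop) hGH, cameron_martin, withDensity_apply _ hGH]
      calc _ ≤ ∫⁻ z in g ⁻¹' {l} ∩ H, ENNReal.ofReal (Real.exp K) ∂(stdGaussian (k+1)) := by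
            refine setLIntegral_mono measurable_const fun z hz => ?_
            rw [← ENNReal.ofReal_prod_of_nonneg (fun _ _ => (Real.exp_pos _).le), ← Real.exp_sum]
            exact ENNReal.ofReal_le_ofReal (Real.exp_le_exp.2 hz.2)
        _ ≤ _ := by
            rw [setLIntegral_const]
            gcongr
            exact Set.inter_subset_left
  have hsum : ∑ l, stdGaussian (k+1) (g ⁻¹' {l}) ≤ 1 := by
    rw [sum_measure_preimage_singleton _ (fun y _ => hg (measurableSet_singleton y))]
    exact prob_le_one
  calc _ ≤ ((k + 1 : ℕ) : ℝ≥0∞)⁻¹ * ∑ l : Fin (k+1),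
        (ENNReal.ofReal (Real.exp (-(e ^ 2 / (2 * (1 + e) * α)) * Real.log N)) +
      ENNReal.ofReal (Real.exp K) * stdGaussian (k+1) (g ⁻¹' {l})) := by
        gcongr with l; exact key l
    _ ≤ ((k + 1 : ℕ) : ℝ≥0∞)⁻¹ * (((k + 1 : ℕ) : ℝ≥0∞) *
        ENNReal.ofReal (Real.exp (-(e ^ 2 / (2 * (1 + e) * α)) * Real.log N)) +
        ENNReal.ofReal (Real.exp K) * 1) := by
        rw [Finset.sum_add_distrib, ← Finset.mul_sum]
        simp only [Finset.sum_const, Finset.card_univ, Fintype.card_fin, nsmul_eq_mul]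
        gcongr
    _ = _ := by
        rw [mul_add, ← mul_assoc, ENNReal.inv_mul_cancel (by simp) (by simp), one_mul, mul_one]
        congr 1
        rw [← ENNReal.ofReal_natCast, ← ENNReal.ofReal_inv_of_pos (by positivity),
          ← ENNReal.ofReal_mul (by positivity)]
        congr 1
        rw [← hN, sub_mul, one_mul, Real.exp_sub, Real.exp_log hN0, ← hK]
        field_simp

lemma meas_tmY (k : ℕ) (s : ℝ) : Measurable (tmY (k+1) s) := by
  unfold tmY
  refine measurable_pi_lambda _ fun j => ?_
  refine Measurable.add ?_ (by fun_prop)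
  have : Measurable (fun p : (Fin (k+1) → ℝ) × Fin (k+1) => p.1 (j + p.2)) :=
    measurable_from_prod_countable_left fun l => measurable_pi_apply _
  exact this.comp (by fun_prop : Measurable
    (fun ω : (Fin (k+1) → ℝ) × Fin (k+1) × (Fin (k+1) → ℝ) => (ω.1, ω.2.1)))

lemma meas_err {k : ℕ} (s : ℝ) (est : ((Fin (k + 1) → ℝ) × (Fin (k + 1) → ℝ)) → Fin (k + 1))
    (hmeas : Measurable est) : MeasurableSet {ω : (Fin (k+1) → ℝ) × Fin (k+1) × (Fin (k+1) → ℝ) |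
      est (ω.1, tmY (k + 1) s ω) = ω.2.1} :=
  measurableSet_eq_fun (hmeas.comp (measurable_fst.prodMk (meas_tmY k s))) (by fun_prop)

/-- sharp threshold for template matching with `σ² = L/(α log L)`.
For any (ties broken arbitrarily) measurable MAP estimators
`est_L (x, y) ∈ argmax_{ℓ'} ⟨x, R_{ℓ'}⁻¹ y⟩`, the error probability
`p_e = Pr(est(X, Y) ≠ ℓ)` satisfies: `p_e → 0` if `α > 2`, and `p_e → 1` if `α < 2`.
(Dimension is written as `k+1` so that the estimator is well-defined.) -/
theorem template_matching_sharp_threshold (α : ℝ) (hα0 : 0 < α)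
    (est : ∀ k : ℕ, ((Fin (k + 1) → ℝ) × (Fin (k + 1) → ℝ)) → Fin (k + 1))
    (hmeas : ∀ k, Measurable (est k))
    (hmax : ∀ k (x y : Fin (k + 1) → ℝ) (ℓ' : Fin (k + 1)),
      corr x y ℓ' ≤ corr x y (est k (x, y))) :
    (2 < α → Tendsto (fun k : ℕ =>
        tmBase (k + 1)
          {ω | est k (ω.1, tmY (k + 1) (sigmaAlpha (k + 1) α) ω) ≠ ω.2.1})
        atTop (nhds 0)) ∧
    (α < 2 → Tendsto (fun k : ℕ =>
        tmBase (k + 1)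
          {ω | est k (ω.1, tmY (k + 1) (sigmaAlpha (k + 1) α) ω) ≠ ω.2.1})
        atTop (nhds 1)) := by
  constructor
  · intro hα
    obtain ⟨e, he, he1, hc⟩ : ∃ e : ℝ, 0 < e ∧ e < 1 / 3 ∧
        1 < (1 - 3 * e) ^ 2 * α / (2 * (1 + e)) := by
      have hcont : ContinuousAt (fun e : ℝ => (1 - 3 * e) ^ 2 * α / (2 * (1 + e))) 0 := by
        apply ContinuousAt.div (by fun_prop) (by fun_prop) (by norm_num)
      have h1 := hcont.eventually (lt_mem_nhds (a := 1) (by simp; linarith))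
      have h2 : ∀ᶠ e : ℝ in nhds 0, e < 1 / 3 := gt_mem_nhds (by norm_num)
      obtain ⟨e, h, he⟩ := (((h1.and h2).filter_mono nhdsWithin_le_nhds).and
        (self_mem_nhdsWithin (s := Set.Ioi (0:ℝ)))).exists
      exact ⟨e, he, h.2, h.1⟩
    have hlim := (badX_tendsto e he (by linarith)).add
      ((exp_log_tendsto (-(e ^ 2 * α / (2 * (1 + e)))) (by rw [neg_lt_zero]; positivity)).add
        (exp_log_tendsto (1 - (1 - 3 * e) ^ 2 * α / (2 * (1 + e))) (by linarith)))
    rw [add_zero, add_zero] at hlim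
    refine tendsto_of_tendsto_of_tendsto_of_le_of_le' tendsto_const_nhds hlim
      (Eventually.of_forall fun _ => zero_le) ?_
    filter_upwards [eventually_ge_atTop 1] with k hk
    refine tm_bound _ (meas_err _ _ (hmeas k)).compl _ _ fun x hx => ?_
    refine (mul_le_mul_right (Finset.sum_le_sum fun l _ =>
      upper_fixed hk hα0 he he1 (est k) (hmax k) x hx l) _).trans (le_of_eq ?_)
    simp only [Finset.sum_const, Finset.card_univ, Fintype.card_fin, nsmul_eq_mul]
    rw [← mul_assoc, ENNReal.inv_mul_cancel (by simp) (by simp), one_mul]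
  · intro hα
    obtain ⟨e, he, he1, hc⟩ : ∃ e : ℝ, 0 < e ∧ e < 1 ∧ (1 + e) * α / 2 + e - 1 < 0 := by
      refine ⟨(2 - α) / 8, by linarith, by linarith, ?_⟩
      nlinarith
    have hlim := (badX_tendsto e he he1).add
      ((exp_log_tendsto (-(e ^ 2 / (2 * (1 + e) * α))) (by rw [neg_lt_zero]; positivity)).add
        (exp_log_tendsto ((1 + e) * α / 2 + e - 1) hc))
    rw [add_zero, add_zero] at hlim
    have hcor : Tendsto (fun k : ℕ => tmBase (k + 1)
          {ω | est k (ω.1, tmY (k + 1) (sigmaAlpha (k + 1) α) ω) = ω.2.1}) atTop (nhds 0) := by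
      refine tendsto_of_tendsto_of_tendsto_of_le_of_le' tendsto_const_nhds hlim
        (Eventually.of_forall fun _ => zero_le) ?_
      filter_upwards [eventually_ge_atTop 1] with k hk
      exact tm_bound _ (meas_err _ _ (hmeas k)) _ _ fun x hx =>
        lower_fixed hk hα0 he (est k) (hmeas k) x hx
    have heq : ∀ k : ℕ, tmBase (k + 1)
          {ω | est k (ω.1, tmY (k + 1) (sigmaAlpha (k + 1) α) ω) ≠ ω.2.1} =
        1 - tmBase (k + 1) {ω | est k (ω.1, tmY (k + 1) (sigmaAlpha (k + 1) α) ω) = ω.2.1} :=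
      fun k => prob_compl_eq_one_sub (meas_err _ _ (hmeas k))
    simp_rw [heq]
    simpa using ENNReal.Tendsto.sub tendsto_const_nhds hcor (Or.inl ENNReal.one_ne_top)

end MRAformal
end

section
/- Exact single-sample mutual information formula: let X ~ N(0, I_L), Z ~ N(0, I_L) and ℓ uniform on {0,…,L−1} be mutually independent, and let Y = R_ℓ X + σ Z. Then I(X; Y) = (L/2)·log(1 + σ^{−2}) − L·σ^{−2} + E_{X,Z}[ log( (1/L) · Σ_{ℓ'=0}^{L−1} exp( σ^{−2} ⟨X + σZ, R_{ℓ'} X⟩ ) ) ]. -/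
open MeasureTheory ProbabilityTheory Filter
open scoped ENNReal

namespace MRAformal

/-- Alignment distortion `ρ(x, x̂) = L⁻¹ min_ℓ ‖x - R_ℓ x̂‖²`,
where `(R_ℓ x̂)_j = x̂_{j+ℓ mod L}`. -/
noncomputable def rho (L : ℕ) (x xh : Fin L → ℝ) : ℝ :=
  (L : ℝ)⁻¹ * ⨅ ℓ : Fin L, ∑ j, (x j - xh (j + ℓ)) ^ 2

/-- Base probability space for the MRA model with `n` samples:
the signal `X`, the i.i.d. uniform shifts `ℓ_i`, and the i.i.d. Gaussian noises `Z_i`. -/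
noncomputable def mraBase (L n : ℕ) :
    Measure ((Fin L → ℝ) × (Fin n → Fin L) × (Fin n → Fin L → ℝ)) :=
  (stdGaussian L).prod ((Measure.pi fun _ => unifFin L).prod (Measure.pi fun _ => stdGaussian L))

/-- The measurements `Y_i = R_{ℓ_i} X + σ Z_i`. -/
def mraY (L n : ℕ) (σ : ℝ) (ω : (Fin L → ℝ) × (Fin n → Fin L) × (Fin n → Fin L → ℝ)) :
    Fin n → Fin L → ℝ :=
  fun i j => ω.1 (j + ω.2.1 i) + σ * ω.2.2 i j

/-- `MSE*_MRA(L, σ², n)`: the infimum over measurable estimators `X̂(Y_1,…,Y_n)` of `E ρ(X, X̂)`.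
Here `σ` is the noise standard deviation. -/
noncomputable def MSEstarMRA (L n : ℕ) (σ : ℝ) : ℝ :=
  sInf { e : ℝ | ∃ f : (Fin n → Fin L → ℝ) → (Fin L → ℝ), Measurable f ∧
    e = ∫ ω, rho L ω.1 (f (mraY L n σ ω)) ∂(mraBase L n) }

/-- `n*_MRA(L, σ², ε) = min {n : MSE*_MRA(L, σ², n) ≤ ε}`. -/
noncomputable def nstarMRA (L : ℕ) (σ ε : ℝ) : ℕ :=
  sInf { n : ℕ | MSEstarMRA L n σ ≤ ε }

/-- `n*_MRA(L, α, ε) := n*_MRA(L, σ²(α), ε)`. -/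
noncomputable def nstarMRAa (L : ℕ) (α ε : ℝ) : ℕ :=
  nstarMRA L (sigmaAlpha L α) ε

/-- Mutual information `I(U; V)`: the Kullback–Leibler divergence of the joint law with
respect to the product of its marginals (natural logarithm), expressed as the integral of
the log of the Radon–Nikodym derivative. -/
noncomputable def mutualInfo {α β : Type*} [MeasurableSpace α] [MeasurableSpace β]
    (μ : Measure (α × β)) : ℝ :=
  ∫ p, Real.log ((μ.rnDeriv ((μ.map Prod.fst).prod (μ.map Prod.snd))) p).toReal ∂μ

/-- Joint law of `(X, (Y_1,…,Y_n))` in the MRA model. -/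
noncomputable def mraJoint (L n : ℕ) (σ : ℝ) :
    Measure ((Fin L → ℝ) × (Fin n → Fin L → ℝ)) :=
  (mraBase L n).map fun ω => (ω.1, mraY L n σ ω)

/-- Joint law of `(X, Y)` for a single MRA measurement `Y = R_ℓ X + σ Z`. -/
noncomputable def mraJoint1 (L : ℕ) (σ : ℝ) : Measure ((Fin L → ℝ) × (Fin L → ℝ)) :=
  ((stdGaussian L).prod ((unifFin L).prod (stdGaussian L))).map
    fun ω => (ω.1, fun j => ω.1 (j + ω.2.1) + σ * ω.2.2 j)


section aux
open scoped NNReal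

instance instProbStd (L : ℕ) : IsProbabilityMeasure (stdGaussian L) := by
  unfold stdGaussian; infer_instance

/-- The noise variance as a nonnegative real. -/
noncomputable def sqVar (σ : ℝ) : ℝ≥0 := ⟨σ ^ 2, sq_nonneg σ⟩

/-- Law of `Y`. -/
noncomputable def nuY (L : ℕ) (σ : ℝ) : Measure (Fin L → ℝ) :=
  Measure.pi fun _ => gaussianReal 0 (1 + sqVar σ)

instance instProbNu (L : ℕ) (σ : ℝ) : IsProbabilityMeasure (nuY L σ) := by
  unfold nuY; infer_instance

/-- Exponent of the one-dimensional likelihood ratio. -/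
noncomputable def er (σ m y : ℝ) : ℝ :=
  Real.log (1 + (σ ^ 2)⁻¹) / 2 - (y - m) ^ 2 / (2 * σ ^ 2) + y ^ 2 / (2 * (1 + σ ^ 2))

lemma pdf_ratio (σ m y : ℝ) (hσ : 0 < σ) :
    gaussianPDFReal m (sqVar σ) y = gaussianPDFReal 0 (1 + sqVar σ) y * Real.exp (er σ m y) := by
  have h1 : ((sqVar σ : ℝ≥0) : ℝ) = σ ^ 2 := rfl
  have h2 : Real.exp (Real.log (1 + (σ ^ 2)⁻¹) / 2) = √(1 + (σ ^ 2)⁻¹) := by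
    rw [Real.sqrt_eq_rpow, Real.rpow_def_of_pos (by positivity)]; ring_nf
  have hpi := Real.pi_pos
  rw [gaussianPDFReal, gaussianPDFReal, NNReal.coe_add, h1, NNReal.coe_one]
  have h3 : er σ m y = Real.log (1 + (σ ^ 2)⁻¹) / 2 +
      (-(y - m) ^ 2 / (2 * σ ^ 2) + (y ^ 2 / (2 * (1 + σ ^ 2)))) := by unfold er; ring
  rw [h3, Real.exp_add, Real.exp_add, h2]
  have h4 : -(y - 0) ^ 2 / (2 * (1 + σ ^ 2)) = - (y ^ 2 / (2 * (1 + σ ^ 2))) := by ring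
  rw [h4, Real.exp_neg]
  have h5 : √(2 * Real.pi * (1 + σ ^ 2)) = √(2 * Real.pi * σ ^ 2) * √(1 + (σ ^ 2)⁻¹) := by
    rw [← Real.sqrt_mul (by positivity)]; congr 1; field_simp; ring
  rw [h5]
  have : √(1 + (σ ^ 2)⁻¹) ≠ 0 := by positivity
  field_simp

lemma measurable_er (σ m : ℝ) : Measurable (er σ m) := by unfold er; fun_prop

lemma gauss_withDensity (σ m : ℝ) (hσ : 0 < σ) :
    gaussianReal m (sqVar σ) =
      (gaussianReal 0 (1 + sqVar σ)).withDensity (fun y => ENNReal.ofReal (Real.exp (er σ m y))) := by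
  have hs : sqVar σ ≠ 0 := by
    intro h; have : σ ^ 2 = 0 := congrArg NNReal.toReal h
    exact absurd this (by positivity)
  rw [gaussianReal_of_var_ne_zero _ hs, gaussianReal_of_var_ne_zero _ (by simp),
    ← withDensity_mul _ (by fun_prop) (by have := measurable_er σ m; fun_prop)]
  congr 1
  ext y
  simp only [Pi.mul_apply, gaussianPDF, pdf_ratio σ m y hσ]
  rw [ENNReal.ofReal_mul (gaussianPDFReal_nonneg _ _ _)]

lemma pi_gauss_withDensity {L : ℕ} (σ : ℝ) (m : Fin L → ℝ) (hσ : 0 < σ) :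
    Measure.pi (fun j => gaussianReal (m j) (sqVar σ)) =
      (nuY L σ).withDensity (fun y => ENNReal.ofReal (Real.exp (∑ j, er σ (m j) (y j)))) := by
  refine Measure.pi_eq fun s hs => ?_
  rw [withDensity_apply _ (.univ_pi hs), ← lintegral_indicator (.univ_pi hs)]
  have hme : ∀ m, Measurable (er σ m) := measurable_er σ
  have hm : ∀ j, Measurable ((s j).indicator
      (fun y => ENNReal.ofReal (Real.exp (er σ (m j) y)))) := fun j =>
    Measurable.indicator (by have := hme (m j); fun_prop) (hs j)
  have key := (iIndepFun_pi (μ := fun _ : Fin L => gaussianReal 0 (1 + sqVar σ))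
    (fun j => (hm j).aemeasurable))
  have key2 := lintegral_prod_eq_prod_lintegral_of_indepFun Finset.univ _ key
    (fun j => (hm j).comp (measurable_pi_apply j))
  have e : ∀ y : Fin L → ℝ, (Set.univ.pi s).indicator
      (fun y => ENNReal.ofReal (Real.exp (∑ j, er σ (m j) (y j)))) y =
      ∏ j, (s j).indicator (fun y => ENNReal.ofReal (Real.exp (er σ (m j) y))) (y j) := by
    intro y
    by_cases h : y ∈ Set.univ.pi s
    · rw [Set.indicator_of_mem h, Real.exp_sum, ENNReal.ofReal_prod_of_nonneg
        (fun _ _ => (Real.exp_pos _).le)]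
      refine Finset.prod_congr rfl fun j _ => ?_
      rw [Set.indicator_of_mem (h j trivial)]
    · rw [Set.indicator_of_notMem h]
      simp only [Set.mem_pi, Set.mem_univ, forall_const, not_forall] at h
      obtain ⟨j, hj⟩ := h
      exact (Finset.prod_eq_zero (Finset.mem_univ j) (Set.indicator_of_notMem hj _)).symm
  simp_rw [e]
  unfold nuY
  rw [key2]
  refine Finset.prod_congr rfl fun j _ => ?_
  rw [gauss_withDensity σ (m j) hσ, withDensity_apply _ (hs j), ← lintegral_indicator (hs j)]
  exact (measurePreserving_eval (fun _ : Fin L => gaussianReal 0 (1 + sqVar σ)) j).lintegral_comp (hm j)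

lemma map_affine {L : ℕ} (σ : ℝ) (m : Fin L → ℝ) (hσ : 0 < σ) :
    (stdGaussian L).map (fun z j => m j + σ * z j) =
      (nuY L σ).withDensity (fun y => ENNReal.ofReal (Real.exp (∑ j, er σ (m j) (y j)))) := by
  rw [← pi_gauss_withDensity σ m hσ]
  have h : ∀ j, (gaussianReal 0 1).map (fun z => m j + σ * z) = gaussianReal (m j) (sqVar σ) := by
    intro j
    have := gaussianReal_map_const_mul (μ := 0) (v := 1) σ
    rw [show (fun z => m j + σ * z) = (fun z => m j + z) ∘ (fun z => σ * z) from rfl,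
      ← Measure.map_map (by fun_prop) (by fun_prop), this, gaussianReal_map_const_add]
    simp [sqVar]; rfl
  have : ∀ j, SigmaFinite ((gaussianReal 0 1).map (fun z => m j + σ * z)) := fun j => by
    rw [h]; infer_instance
  have := Measure.pi_map_pi (μ := fun _ : Fin L => gaussianReal 0 1)
    (f := fun j z => m j + σ * z) (fun j => by fun_prop)
  unfold stdGaussian
  rw [this]
  simp_rw [h]

/-- The cyclic shift. -/
def rot {L : ℕ} (ℓ : Fin L) (x : Fin L → ℝ) : Fin L → ℝ := fun j => x (j + ℓ)

lemma measurable_rot {L : ℕ} (ℓ : Fin L) : Measurable (rot ℓ) := by unfold rot; fun_prop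

lemma mp_rot {L : ℕ} [NeZero L] (ℓ : Fin L) :
    MeasurePreserving (rot ℓ) (stdGaussian L) (stdGaussian L) := by
  refine ⟨measurable_rot ℓ, ?_⟩
  have := Measure.pi_map_piCongrLeft (Equiv.addRight (-ℓ)) (β := fun _ : Fin L => ℝ)
    (fun _ : Fin L => gaussianReal 0 1)
  unfold stdGaussian
  convert this using 2
  ext x j
  obtain ⟨k, rfl⟩ := (Equiv.addRight (-ℓ)).surjective j
  rw [MeasurableEquiv.coe_piCongrLeft, Equiv.piCongrLeft_apply_apply]
  simp [rot]

lemma mp_add {L : ℕ} (σ : ℝ) :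
    MeasurePreserving (fun p : (Fin L → ℝ) × (Fin L → ℝ) => fun j => p.1 j + σ * p.2 j)
      ((stdGaussian L).prod (stdGaussian L)) (nuY L σ) := by
  have h1 := measurePreserving_arrowProdEquivProdArrow ℝ ℝ (Fin L)
    (fun _ => gaussianReal 0 1) (fun _ => gaussianReal 0 1)
  have h0 : MeasurePreserving (fun q : ℝ × ℝ => q.1 + σ * q.2)
      ((gaussianReal 0 1).prod (gaussianReal 0 1)) (gaussianReal 0 (1 + sqVar σ)) := by
    refine ⟨by fun_prop, ?_⟩
    have := gaussianReal_conv_gaussianReal (m₁ := 0) (m₂ := 0) (v₁ := 1) (v₂ := sqVar σ)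
    rw [add_zero] at this
    rw [← this, Measure.conv]
    have h3 : (gaussianReal 0 1).map (fun z => σ * z) = gaussianReal 0 (sqVar σ) := by
      rw [gaussianReal_map_const_mul]; simp [sqVar]; rfl
    rw [← h3]
    conv_rhs => rw [← Measure.map_id (μ := gaussianReal 0 1)]
    rw [Measure.map_map (by fun_prop) (by fun_prop), Measure.map_prod_map _ _ (by fun_prop) (by fun_prop), Measure.map_map (by fun_prop) (by fun_prop)]
    rfl
  have h2 := measurePreserving_pi (fun _ : Fin L => (gaussianReal 0 1).prod (gaussianReal 0 1))
    (fun _ => gaussianReal 0 (1 + sqVar σ)) (fun _ => h0)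
  exact h2.comp h1.symm

/-- The joint map for a fixed shift. -/
def Tm {L : ℕ} (σ : ℝ) (ℓ : Fin L) (p : (Fin L → ℝ) × (Fin L → ℝ)) :
    (Fin L → ℝ) × (Fin L → ℝ) := (p.1, fun j => p.1 (j + ℓ) + σ * p.2 j)

lemma measurable_Tm {L : ℕ} (σ : ℝ) (ℓ : Fin L) : Measurable (Tm σ ℓ) := by
  unfold Tm; fun_prop

lemma measurable_esum {L : ℕ} (σ : ℝ) (ℓ : Fin L) :
    Measurable (fun p : (Fin L → ℝ) × (Fin L → ℝ) => ∑ j, er σ (p.1 (j + ℓ)) (p.2 j)) := by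
  unfold er; fun_prop

lemma joint_eq (L : ℕ) (σ : ℝ) : mraJoint1 L σ =
    (L : ℝ≥0∞)⁻¹ • ∑ ℓ : Fin L, ((stdGaussian L).prod (stdGaussian L)).map (Tm σ ℓ) := by
  have hm : Measurable (fun ω : (Fin L → ℝ) × Fin L × (Fin L → ℝ) =>
      ((ω.1, fun j => ω.1 (j + ω.2.1) + σ * ω.2.2 j) : (Fin L → ℝ) × (Fin L → ℝ))) := by
    refine measurable_fst.prodMk (measurable_pi_iff.2 fun j => Measurable.add ?_ (by fun_prop))
    have : (fun ω : (Fin L → ℝ) × Fin L × (Fin L → ℝ) => ω.1 (j + ω.2.1)) =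
      fun ω => ∑ ℓ, if ω.2.1 = ℓ then ω.1 (j + ℓ) else 0 := by
      ext ω; simp
    rw [this]
    refine Finset.measurable_sum _ fun ℓ _ => Measurable.ite ?_ (by fun_prop) (by fun_prop)
    exact (measurable_fst.comp measurable_snd) (measurableSet_singleton ℓ)
  have : SFinite (unifFin L) := by unfold unifFin; infer_instance
  refine Measure.ext_of_lintegral _ fun g hg => ?_
  rw [lintegral_smul_measure, lintegral_finsetSum_measure, mraJoint1, lintegral_map hg hm,
    lintegral_prod _ (by fun_prop)]
  have h1 : ∀ ℓ : Fin L, ∫⁻ p, g p ∂((stdGaussian L).prod (stdGaussian L)).map (Tm σ ℓ) =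
      ∫⁻ x, ∫⁻ z, g (Tm σ ℓ (x, z)) ∂stdGaussian L ∂stdGaussian L := fun ℓ => by
    rw [lintegral_map hg (measurable_Tm σ ℓ), lintegral_prod]
    exact (hg.comp (measurable_Tm σ ℓ)).aemeasurable
  simp_rw [h1]
  rw [← lintegral_finsetSum, smul_eq_mul, ← lintegral_const_mul]
  · refine lintegral_congr fun x => ?_
    rw [lintegral_prod]
    · rw [unifFin, lintegral_smul_measure, lintegral_count, tsum_fintype, smul_eq_mul]
      rfl
    · exact (hg.comp (hm.comp measurable_prodMk_left)).aemeasurable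
  · refine Finset.measurable_sum _ fun ℓ _ => ?_
    exact (hg.comp (measurable_Tm σ ℓ)).lintegral_prod_right'
  · intro ℓ _
    exact (hg.comp (measurable_Tm σ ℓ)).lintegral_prod_right'

lemma map_prod_withDensity {α β γ : Type*} [MeasurableSpace α] [MeasurableSpace β]
    [MeasurableSpace γ] (μ : Measure α) (ζ : Measure β) (ν : Measure γ) [SFinite μ] [SFinite ζ]
    [SFinite ν] (T : α → β → γ) (hT : Measurable (fun p : α × β => T p.1 p.2))
    (d : α × γ → ℝ≥0∞) (hd : Measurable d)
    (h : ∀ x, ζ.map (T x) = ν.withDensity (fun y => d (x, y))) :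
    (μ.prod ζ).map (fun p => (p.1, T p.1 p.2)) = (μ.prod ν).withDensity d := by
  have hT2 : Measurable (fun p : α × β => (p.1, T p.1 p.2)) := measurable_fst.prodMk hT
  refine Measure.ext_of_lintegral _ fun g hg => ?_
  rw [lintegral_map hg hT2, lintegral_withDensity_eq_lintegral_mul _ hd hg,
    lintegral_prod (fun a : α × β => g (a.1, T a.1 a.2)) (hg.comp hT2).aemeasurable,
    lintegral_prod _ (hd.mul hg).aemeasurable]
  refine lintegral_congr fun x => ?_
  have hgx : Measurable (fun y => g (x, y)) := hg.comp measurable_prodMk_left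
  have hdx : Measurable (fun y => d (x, y)) := hd.comp measurable_prodMk_left
  have hTx : Measurable (T x) := hT.comp measurable_prodMk_left
  have := lintegral_map (μ := ζ) hgx hTx
  rw [h x, lintegral_withDensity_eq_lintegral_mul _ hdx hgx] at this
  exact this.symm

lemma map_Tm {L : ℕ} (σ : ℝ) (hσ : 0 < σ) (ℓ : Fin L) :
    ((stdGaussian L).prod (stdGaussian L)).map (Tm σ ℓ) =
      ((stdGaussian L).prod (nuY L σ)).withDensity
        (fun p => ENNReal.ofReal (Real.exp (∑ j, er σ (p.1 (j + ℓ)) (p.2 j)))) := by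
  have he := measurable_esum σ ℓ
  exact map_prod_withDensity (stdGaussian L) (stdGaussian L) (nuY L σ)
    (fun x z j => x (j + ℓ) + σ * z j) (by fun_prop) _ (by fun_prop)
    (fun x => map_affine σ (fun j => x (j + ℓ)) hσ)

/-- Joint density relative to the product of the marginals. -/
noncomputable def dens (L : ℕ) (σ : ℝ) (p : (Fin L → ℝ) × (Fin L → ℝ)) : ℝ :=
  (L : ℝ)⁻¹ * ∑ ℓ : Fin L, Real.exp (∑ j, er σ (p.1 (j + ℓ)) (p.2 j))

lemma measurable_dens (L : ℕ) (σ : ℝ) : Measurable (dens L σ) := by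
  have := fun ℓ : Fin L => measurable_esum σ ℓ
  unfold dens; fun_prop

lemma joint_dens (L : ℕ) [NeZero L] (σ : ℝ) (hσ : 0 < σ) : mraJoint1 L σ =
    ((stdGaussian L).prod (nuY L σ)).withDensity (fun p => ENNReal.ofReal (dens L σ p)) := by
  have hL : (0 : ℝ) < L := by exact_mod_cast Nat.pos_of_ne_zero (NeZero.ne L)
  have hd := measurable_dens L σ
  have he := fun ℓ : Fin L => measurable_esum σ ℓ
  rw [joint_eq]
  simp_rw [map_Tm σ hσ]
  refine Measure.ext_of_lintegral _ fun g hg => ?_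
  rw [lintegral_smul_measure, lintegral_finsetSum_measure,
    lintegral_withDensity_eq_lintegral_mul _ (by fun_prop) hg]
  have h1 : ∀ ℓ : Fin L, ∫⁻ p, g p ∂((stdGaussian L).prod (nuY L σ)).withDensity
        (fun p => ENNReal.ofReal (Real.exp (∑ j, er σ (p.1 (j + ℓ)) (p.2 j)))) =
      ∫⁻ p, ENNReal.ofReal (Real.exp (∑ j, er σ (p.1 (j + ℓ)) (p.2 j))) * g p
        ∂((stdGaussian L).prod (nuY L σ)) := fun ℓ => by
    have := he ℓ
    exact lintegral_withDensity_eq_lintegral_mul _ (by fun_prop) hg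
  simp_rw [h1]
  rw [← lintegral_finsetSum, smul_eq_mul, ← lintegral_const_mul]
  · refine lintegral_congr fun p => ?_
    rw [← Finset.sum_mul, ← mul_assoc, Pi.mul_apply]
    congr 1
    rw [dens, ENNReal.ofReal_mul (by positivity), ENNReal.ofReal_inv_of_pos hL,
      ENNReal.ofReal_natCast, ENNReal.ofReal_sum_of_nonneg (fun _ _ => (Real.exp_pos _).le)]
  · fun_prop
  · intro ℓ _
    have := he ℓ
    fun_prop

lemma card_smul {α : Type*} [MeasurableSpace α] (L : ℕ) [NeZero L] (μ : Measure α) :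
    (L : ℝ≥0∞)⁻¹ • ∑ _ℓ : Fin L, μ = μ := by
  rw [Finset.sum_const, Finset.card_univ, Fintype.card_fin, ← Nat.cast_smul_eq_nsmul ℝ≥0∞, smul_smul,
    ENNReal.inv_mul_cancel (by simp [NeZero.ne L]) (by simp), one_smul]

lemma joint_fst (L : ℕ) [NeZero L] (σ : ℝ) : (mraJoint1 L σ).map Prod.fst = stdGaussian L := by
  rw [joint_eq, Measure.map_smul, Measure.map_finset_sum' (by fun_prop)]
  have : ∀ ℓ : Fin L, (((stdGaussian L).prod (stdGaussian L)).map (Tm σ ℓ)).map Prod.fst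
      = stdGaussian L := fun ℓ => by
    rw [Measure.map_map measurable_fst (measurable_Tm σ ℓ)]
    exact measurePreserving_fst.map_eq
  simp_rw [this]
  exact card_smul L _

lemma joint_snd (L : ℕ) [NeZero L] (σ : ℝ) : (mraJoint1 L σ).map Prod.snd = nuY L σ := by
  rw [joint_eq, Measure.map_smul, Measure.map_finset_sum' (by fun_prop)]
  have : ∀ ℓ : Fin L, (((stdGaussian L).prod (stdGaussian L)).map (Tm σ ℓ)).map Prod.snd
      = nuY L σ := fun ℓ => by
    rw [Measure.map_map measurable_snd (measurable_Tm σ ℓ)]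
    exact ((mp_add σ).comp ((mp_rot ℓ).prod (MeasurePreserving.id (stdGaussian L)))).map_eq
  simp_rw [this]
  exact card_smul L _

lemma mi_eq (L : ℕ) [NeZero L] (σ : ℝ) (hσ : 0 < σ) : mutualInfo (mraJoint1 L σ) =
    ∫ p, Real.log (dens L σ p) ∂(mraJoint1 L σ) := by
  unfold mutualInfo
  rw [joint_fst, joint_snd]
  have hd := measurable_dens L σ
  have h := Measure.rnDeriv_withDensity ((stdGaussian L).prod (nuY L σ))
    (f := fun p => ENNReal.ofReal (dens L σ p)) (by fun_prop)
  rw [← joint_dens L σ hσ] at h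
  have hac : mraJoint1 L σ ≪ (stdGaussian L).prod (nuY L σ) := by
    rw [joint_dens L σ hσ]; exact withDensity_absolutelyContinuous _ _
  refine integral_congr_ae ?_
  filter_upwards [hac.ae_le h] with p hp
  rw [hp, ENNReal.toReal_ofReal]
  unfold dens; positivity

/-- The log-sum-exp term. -/
noncomputable def Hf (L : ℕ) (σ : ℝ) (p : (Fin L → ℝ) × (Fin L → ℝ)) : ℝ :=
  Real.log ((L : ℝ)⁻¹ * ∑ ℓ : Fin L, Real.exp ((σ ^ 2)⁻¹ * ∑ j, p.2 j * p.1 (j + ℓ)))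

lemma log_dens (L : ℕ) [NeZero L] (σ : ℝ) (hσ : 0 < σ) (p : (Fin L → ℝ) × (Fin L → ℝ)) :
    Real.log (dens L σ p) = (L : ℝ) / 2 * Real.log (1 + (σ ^ 2)⁻¹)
      - (∑ j, p.1 j ^ 2) * (2 * σ ^ 2)⁻¹
      + (∑ j, p.2 j ^ 2) * ((2 * (1 + σ ^ 2))⁻¹ - (2 * σ ^ 2)⁻¹) + Hf L σ p := by
  have hL : (0 : ℝ) < L := by exact_mod_cast Nat.pos_of_ne_zero (NeZero.ne L)
  set C := (L : ℝ) / 2 * Real.log (1 + (σ ^ 2)⁻¹)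
      - (∑ j, p.1 j ^ 2) * (2 * σ ^ 2)⁻¹
      + (∑ j, p.2 j ^ 2) * ((2 * (1 + σ ^ 2))⁻¹ - (2 * σ ^ 2)⁻¹) with hC
  have h1 : ∀ ℓ : Fin L, ∑ j, er σ (p.1 (j + ℓ)) (p.2 j) =
      C + (σ ^ 2)⁻¹ * ∑ j, p.2 j * p.1 (j + ℓ) := fun ℓ => by
    have h2 : ∑ j, p.1 j ^ 2 = ∑ j, p.1 (j + ℓ) ^ 2 :=
      (Equiv.sum_comp (Equiv.addRight ℓ) (fun j => p.1 j ^ 2)).symm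
    have h3 : (L : ℝ) / 2 * Real.log (1 + (σ ^ 2)⁻¹) =
        ∑ j : Fin L, Real.log (1 + (σ ^ 2)⁻¹) / 2 := by
      simp; ring
    rw [hC, h2, h3, Finset.sum_mul, Finset.sum_mul, Finset.mul_sum, ← Finset.sum_sub_distrib,
      ← Finset.sum_add_distrib, ← Finset.sum_add_distrib]
    refine Finset.sum_congr rfl fun j _ => ?_
    unfold er
    field_simp
    ring
  have hpos : 0 < ∑ ℓ : Fin L, Real.exp ((σ ^ 2)⁻¹ * ∑ j, p.2 j * p.1 (j + ℓ)) :=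
    Finset.sum_pos (fun _ _ => Real.exp_pos _) Finset.univ_nonempty
  unfold dens Hf
  simp_rw [h1, Real.exp_add]
  rw [← Finset.mul_sum, mul_left_comm, Real.log_mul (Real.exp_pos _).ne' (by positivity),
    Real.log_exp]

lemma abs_Hf (L : ℕ) [NeZero L] (σ : ℝ) (p : (Fin L → ℝ) × (Fin L → ℝ)) :
    |Hf L σ p| ≤ (σ ^ 2)⁻¹ * (∑ j, p.2 j ^ 2 + ∑ j, p.1 j ^ 2) := by
  have hL : (0 : ℝ) < L := by exact_mod_cast Nat.pos_of_ne_zero (NeZero.ne L)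
  set B := (σ ^ 2)⁻¹ * (∑ j, p.2 j ^ 2 + ∑ j, p.1 j ^ 2)
  have ha : ∀ ℓ : Fin L, |(σ ^ 2)⁻¹ * ∑ j, p.2 j * p.1 (j + ℓ)| ≤ B := fun ℓ => by
    have h2 : ∑ j, p.1 j ^ 2 = ∑ j, p.1 (j + ℓ) ^ 2 :=
      (Equiv.sum_comp (Equiv.addRight ℓ) (fun j => p.1 j ^ 2)).symm
    rw [abs_mul, abs_of_nonneg (by positivity)]
    refine mul_le_mul_of_nonneg_left ?_ (by positivity)
    rw [h2, ← Finset.sum_add_distrib]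
    refine (Finset.abs_sum_le_sum_abs _ _).trans (Finset.sum_le_sum fun j _ => ?_)
    rw [abs_le]
    constructor <;> nlinarith [sq_nonneg (p.2 j + p.1 (j + ℓ)), sq_nonneg (p.2 j - p.1 (j + ℓ)),
      sq_nonneg (p.2 j), sq_nonneg (p.1 (j + ℓ))]
  have hpos : 0 < ∑ ℓ : Fin L, Real.exp ((σ ^ 2)⁻¹ * ∑ j, p.2 j * p.1 (j + ℓ)) :=
    Finset.sum_pos (fun _ _ => Real.exp_pos _) Finset.univ_nonempty
  have hc : ∀ c : ℝ, (L : ℝ)⁻¹ * ∑ _ℓ : Fin L, c = c := fun c => by simp [hL.ne']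
  unfold Hf
  rw [abs_le]
  constructor
  · rw [Real.le_log_iff_exp_le (by positivity), ← hc (Real.exp (-B))]
    gcongr with ℓ
    exact (abs_le.1 (ha ℓ)).1
  · rw [Real.log_le_iff_le_exp (by positivity), ← hc (Real.exp B)]
    gcongr with ℓ
    exact (abs_le.1 (ha ℓ)).2

lemma measurable_Hf (L : ℕ) (σ : ℝ) : Measurable (Hf L σ) := by unfold Hf; fun_prop

lemma sq_int (L : ℕ) (v : ℝ≥0) :
    Integrable (fun y : Fin L → ℝ => ∑ j, y j ^ 2) (Measure.pi fun _ => gaussianReal 0 v) ∧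
    ∫ y : Fin L → ℝ, ∑ j, y j ^ 2 ∂(Measure.pi fun _ => gaussianReal 0 v) = L * v := by
  have h0 : Integrable (fun t : ℝ => t ^ 2) (gaussianReal 0 v) :=
    (memLp_id_gaussianReal (μ := 0) (v := v) 2).integrable_sq
  have h1 : ∫ t, t ^ 2 ∂(gaussianReal 0 v) = v := by
    have := variance_fun_id_gaussianReal (μ := 0) (v := v)
    rw [variance_of_integral_eq_zero (by fun_prop) (by simp)] at this
    simpa using this
  have h2 : ∀ j : Fin L, Integrable (fun y : Fin L → ℝ => y j ^ 2)
      (Measure.pi fun _ => gaussianReal 0 v) := fun j =>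
    integrable_comp_eval (μ := fun _ : Fin L => gaussianReal 0 v) (i := j) h0
  refine ⟨integrable_finsetSum _ fun j _ => h2 j, ?_⟩
  rw [integral_finsetSum _ fun j _ => h2 j]
  have h3 : ∀ j : Fin L, ∫ y : Fin L → ℝ, y j ^ 2 ∂(Measure.pi fun _ => gaussianReal 0 v) = v := by
    intro j
    rw [← h1]
    exact integral_comp_eval (μ := fun _ : Fin L => gaussianReal 0 v) (i := j)
      h0.aestronglyMeasurable
  simp [h3]

lemma dens_rot (L : ℕ) [NeZero L] (σ : ℝ) (ℓ : Fin L) (x y : Fin L → ℝ) :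
    dens L σ (rot ℓ x, y) = dens L σ (x, y) := by
  unfold dens rot
  congr 1
  rw [← Equiv.sum_comp (Equiv.addRight ℓ) 
    (fun ℓ' => Real.exp (∑ j, er σ ((x, y).1 (j + ℓ')) ((x, y).2 j)))]
  simp [add_assoc]

end aux

/-- exact single-sample mutual information formula. With `Y = R_ℓ X + σ Z`,
`I(X;Y) = (L/2)·log(1 + σ⁻²) − L·σ⁻² + E_{X,Z}[log((1/L)·∑_{ℓ'} exp(σ⁻²⟨X+σZ, R_{ℓ'}X⟩))]`. -/
theorem single_sample_mutual_info_formula (L : ℕ) (hL : 1 ≤ L) (σ : ℝ) (hσ : 0 < σ) :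
    mutualInfo (mraJoint1 L σ) =
      (L : ℝ) / 2 * Real.log (1 + (σ ^ 2)⁻¹) - (L : ℝ) / σ ^ 2 +
        ∫ p : (Fin L → ℝ) × (Fin L → ℝ),
          Real.log ((L : ℝ)⁻¹ * ∑ ℓ' : Fin L,
            Real.exp ((σ ^ 2)⁻¹ * ∑ j, (p.1 j + σ * p.2 j) * p.1 (j + ℓ')))
          ∂((stdGaussian L).prod (stdGaussian L)) := by
  have : NeZero L := ⟨by omega⟩
  have hLr : (0 : ℝ) < L := by exact_mod_cast hL
  set γγ := (stdGaussian L).prod (stdGaussian L) with hγ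
  let S : (Fin L → ℝ) × (Fin L → ℝ) → (Fin L → ℝ) × (Fin L → ℝ) :=
    fun p => (p.1, fun j => p.1 j + σ * p.2 j)
  have hS : Measurable S := by fun_prop
  -- squares
  have hx := measurePreserving_fst (μ := stdGaussian L) (ν := stdGaussian L)
  have hy := mp_add (L := L) σ
  have hsx := sq_int L 1
  have hsy := sq_int L (1 + sqVar σ)
  have ix : Integrable (fun p => ∑ j, (S p).1 j ^ 2) γγ := hx.integrable_comp_of_integrable hsx.1
  have iy : Integrable (fun p => ∑ j, (S p).2 j ^ 2) γγ := hy.integrable_comp_of_integrable hsy.1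
  have vx : ∫ p, ∑ j, (S p).1 j ^ 2 ∂γγ = L := by
    have := integral_map (μ := γγ) hx.aemeasurable
      (f := fun x : Fin L → ℝ => ∑ j, x j ^ 2) (Measurable.aestronglyMeasurable (by fun_prop))
    rw [hx.map_eq] at this
    refine this.symm.trans ?_
    rw [stdGaussian, hsx.2]; simp
  have vy : ∫ p, ∑ j, (S p).2 j ^ 2 ∂γγ = L * (1 + σ ^ 2) := by
    have := integral_map (μ := γγ) hy.aemeasurable
      (f := fun x : Fin L → ℝ => ∑ j, x j ^ 2) (Measurable.aestronglyMeasurable (by fun_prop))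
    rw [hy.map_eq] at this
    refine this.symm.trans ?_
    rw [nuY, hsy.2, NNReal.coe_add]; rfl
  have iH : Integrable (fun p => Hf L σ (S p)) γγ := by
    refine Integrable.mono' ((iy.add ix).const_mul (σ ^ 2)⁻¹)
      ((measurable_Hf L σ).comp hS).aestronglyMeasurable (ae_of_all _ fun p => ?_)
    exact abs_Hf L σ (S p)
  have iA : Integrable (fun p => (L : ℝ) / 2 * Real.log (1 + (σ ^ 2)⁻¹)
      - (∑ j, (S p).1 j ^ 2) * (2 * σ ^ 2)⁻¹) γγ :=
    (integrable_const _).sub (ix.mul_const _)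
  have iB : Integrable (fun p => (L : ℝ) / 2 * Real.log (1 + (σ ^ 2)⁻¹)
      - (∑ j, (S p).1 j ^ 2) * (2 * σ ^ 2)⁻¹
      + (∑ j, (S p).2 j ^ 2) * ((2 * (1 + σ ^ 2))⁻¹ - (2 * σ ^ 2)⁻¹)) γγ :=
    iA.add (iy.mul_const _)
  have iD : Integrable (fun p => Real.log (dens L σ (S p))) γγ := by
    simp_rw [log_dens L σ hσ]
    exact iB.add iH
  have hlog : Measurable (fun p => Real.log (dens L σ p)) := (measurable_dens L σ).log
  have hR : ∀ ℓ : Fin L, MeasurePreserving (Prod.map (rot ℓ) id) γγ γγ := fun ℓ =>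
    (mp_rot ℓ).prod (MeasurePreserving.id (stdGaussian L))
  have hcomp : ∀ ℓ : Fin L, (fun p => Real.log (dens L σ (Tm σ ℓ p))) =
      (fun p => Real.log (dens L σ (S p))) ∘ Prod.map (rot ℓ) id := fun ℓ => by
    ext p
    exact congrArg Real.log (dens_rot L σ ℓ p.1 _).symm
  have iT : ∀ ℓ : Fin L, Integrable (fun p => Real.log (dens L σ p)) (γγ.map (Tm σ ℓ)) := fun ℓ => by
    rw [integrable_map_measure hlog.aestronglyMeasurable (measurable_Tm σ ℓ).aemeasurable]
    change Integrable (fun p => Real.log (dens L σ (Tm σ ℓ p))) γγ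
    rw [hcomp]
    exact (hR ℓ).integrable_comp_of_integrable iD
  have vT : ∀ ℓ : Fin L, ∫ p, Real.log (dens L σ p) ∂(γγ.map (Tm σ ℓ)) =
      ∫ p, Real.log (dens L σ (S p)) ∂γγ := fun ℓ => by
    rw [integral_map (measurable_Tm σ ℓ).aemeasurable hlog.aestronglyMeasurable, hcomp]
    have := integral_map (μ := γγ) (hR ℓ).aemeasurable
      (f := fun p => Real.log (dens L σ (S p))) (hlog.comp hS).aestronglyMeasurable
    rw [(hR ℓ).map_eq] at this
    exact this.symm
  rw [mi_eq L σ hσ, joint_eq, integral_smul_measure, integral_finsetSum_measure (fun ℓ _ => iT ℓ)]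
  rw [Finset.sum_congr rfl fun ℓ _ => vT ℓ]
  rw [Finset.sum_const, Finset.card_univ, Fintype.card_fin, ENNReal.toReal_inv,
    ENNReal.toReal_natCast, nsmul_eq_mul, smul_eq_mul, inv_mul_cancel_left₀ hLr.ne']
  simp_rw [log_dens L σ hσ]
  rw [integral_add iB iH, integral_add iA (iy.mul_const _),
    integral_sub (integrable_const _) (ix.mul_const _), integral_const, integral_mul_const,
    integral_mul_const, vx, vy]
  have h1 : γγ.real Set.univ = 1 := by simp [hγ]
  rw [h1]
  have h2 : ∫ p, Hf L σ (S p) ∂γγ = ∫ p : (Fin L → ℝ) × (Fin L → ℝ),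
          Real.log ((L : ℝ)⁻¹ * ∑ ℓ' : Fin L,
            Real.exp ((σ ^ 2)⁻¹ * ∑ j, (p.1 j + σ * p.2 j) * p.1 (j + ℓ'))) ∂γγ := rfl
  rw [h2, one_smul]
  congr 1
  field_simp
  ring

end MRAformal
end

section
/- Mutual information upper bound at very low SNR: there exists a constant C > 0 such that for all L ≥ 2 and all σ² > 2, the single-sample mutual information in the MRA model satisfies I(X; Y) ≤ log( 1 + L^{−1}·e^{L/σ²} ) + C·L/σ⁴. In particular, if σ² = L/(α log L) with 0 < α < 1 fixed, then limsup_{L→∞} I(X; Y)/L^{α−1} ≤ 1 (so I(X; Y) → 0 as L → ∞). -/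
open MeasureTheory ProbabilityTheory Filter
open scoped ENNReal

namespace MRAformal

theorem lintegral_pi_prod {n : ℕ} (μ : Fin n → Measure ℝ) [∀ i, SigmaFinite (μ i)]
    (f : Fin n → ℝ → ℝ≥0∞) (hf : ∀ i, Measurable (f i)) :
    ∫⁻ x, ∏ i, f i (x i) ∂(Measure.pi μ) = ∏ i, ∫⁻ x, f i x ∂(μ i) := by
  induction n with
  | zero => simp
  | succ n ih =>
    rw [← ((measurePreserving_piFinSuccAbove μ 0).symm).lintegral_comp_emb
      (MeasurableEquiv.measurableEmbedding _)]
    have : ∀ a : ℝ × (Fin n → ℝ),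
        (∏ i, f i ((MeasurableEquiv.piFinSuccAbove (fun _ : Fin (n+1) => ℝ) 0).symm a i))
        = f 0 a.1 * ∏ i : Fin n, f i.succ (a.2 i) := by
      intro a
      rw [Fin.prod_univ_succ]
      rfl
    simp_rw [this]
    rw [Fin.prod_univ_succ, ← ih (fun i => μ i.succ) (fun i => f i.succ) (fun i => hf _)]
    refine lintegral_prod_mul (μ := μ 0) (ν := Measure.pi fun i : Fin n => μ i.succ) (f := f 0)
      (g := fun x : Fin n → ℝ => ∏ i, f i.succ (x i)) (hf 0).aemeasurable ?_
    · exact (Finset.measurable_fun_prod _ fun i _ => (hf _).comp (measurable_pi_apply i)).aemeasurable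

theorem pi_withDens {n : ℕ} (μ : Fin n → Measure ℝ) [∀ i, SigmaFinite (μ i)]
    (f : Fin n → ℝ → ℝ≥0∞) (hf : ∀ i, Measurable (f i))
    [∀ i, SigmaFinite ((μ i).withDensity (f i))] :
    Measure.pi (fun i => (μ i).withDensity (f i)) =
      (Measure.pi μ).withDensity (fun x => ∏ i, f i (x i)) := by
  refine Measure.pi_eq fun s hs => ?_
  rw [withDensity_apply _ (MeasurableSet.univ_pi hs), ← lintegral_indicator (MeasurableSet.univ_pi hs)]
  have : ∀ x : Fin n → ℝ, (Set.univ.pi s).indicator (fun x => ∏ i, f i (x i)) x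
      = ∏ i, (s i).indicator (f i) (x i) := by
    intro x
    by_cases hx : x ∈ Set.univ.pi s
    · rw [Set.indicator_of_mem hx]
      refine Finset.prod_congr rfl fun i _ => ?_
      rw [Set.indicator_of_mem (hx i trivial)]
    · rw [Set.indicator_of_notMem hx]
      simp only [Set.mem_pi, Set.mem_univ, true_imp_iff, not_forall] at hx
      obtain ⟨i, hi⟩ := hx
      symm
      exact Finset.prod_eq_zero (Finset.mem_univ i) (Set.indicator_of_notMem hi _)
  simp_rw [this]
  rw [lintegral_pi_prod μ _ (fun i => (hf i).indicator (hs i))]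
  refine Finset.prod_congr rfl fun i _ => ?_
  rw [withDensity_apply _ (hs i), lintegral_indicator (hs i)]

/-- Ratio of the conditional density of `Y` to its marginal density, in one coordinate. -/
noncomputable def hd (s : NNReal) (a y : ℝ) : ℝ≥0∞ :=
  ENNReal.ofReal (gaussianPDFReal a s y / gaussianPDFReal 0 (1 + s) y)

theorem measurable_hd (s : NNReal) : Measurable (fun p : ℝ × ℝ => hd s p.1 p.2) := by
  unfold hd gaussianPDFReal
  fun_prop

theorem measurable_hd_right (s : NNReal) (a : ℝ) : Measurable (hd s a) := by
  unfold hd gaussianPDFReal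
  fun_prop

theorem hd_F1 (s : NNReal) (hs : 0 < s) (a : ℝ) :
    gaussianReal a s = (gaussianReal 0 (1 + s)).withDensity (hd s a) := by
  rw [gaussianReal_of_var_ne_zero _ hs.ne', gaussianReal_of_var_ne_zero _ (by positivity),
    ← withDensity_mul _ (measurable_gaussianPDF _ _) (measurable_hd_right s a)]
  congr 1
  ext y
  have hq := gaussianPDFReal_pos 0 (1 + s) y (by positivity)
  simp only [Pi.mul_apply, gaussianPDF, hd]
  rw [← ENNReal.ofReal_mul hq.le, mul_div_cancel₀ _ hq.ne']

theorem gauss_mul_hd (s : NNReal) (hs : 0 < s) (a y : ℝ) :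
    gaussianPDF 0 1 a * hd s a y = gaussianPDF (y / (1 + s)) (s / (1 + s)) a := by
  have hq := gaussianPDFReal_pos 0 (1 + s) y (by positivity)
  simp only [gaussianPDF, hd]
  rw [← ENNReal.ofReal_mul (gaussianPDFReal_nonneg _ _ _)]
  congr 1
  rw [← mul_div_assoc, div_eq_iff hq.ne']
  have hs' : (0 : ℝ) < s := hs
  simp only [gaussianPDFReal, NNReal.coe_add, NNReal.coe_one, NNReal.coe_div]
  have e1 : ∀ p r x y : ℝ, (p * Real.exp x) * (r * Real.exp y) = (p * r) * Real.exp (x + y) := by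
    intros; rw [Real.exp_add]; ring
  rw [e1, e1, ← mul_inv, ← mul_inv, ← Real.sqrt_mul (by positivity),
    ← Real.sqrt_mul (by positivity)]
  congr 2
  · congr 1
    field_simp
  · field_simp
    ring

theorem hd_F2 (s : NNReal) (hs : 0 < s) (y : ℝ) :
    ∫⁻ a, hd s a y ∂(gaussianReal 0 1) = 1 := by
  have hm : Measurable (fun a => hd s a y) := by
    unfold hd gaussianPDFReal
    fun_prop
  rw [gaussianReal_of_var_ne_zero _ one_ne_zero,
    lintegral_withDensity_eq_lintegral_mul _ (measurable_gaussianPDF _ _) hm]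
  simp only [Pi.mul_apply, gauss_mul_hd s hs]
  exact lintegral_gaussianPDF_eq_one _ (by positivity)

/-- The Mehler kernel. -/
noncomputable def Kr (s : NNReal) (a b : ℝ) : ℝ :=
  (1 + s) * (Real.sqrt (s * (s + 2)))⁻¹ *
    Real.exp (-(a ^ 2 + b ^ 2 - 2 * (1 + s) * a * b) / (2 * (s * (s + 2))))

theorem gauss_mul_hd_hd (s : NNReal) (hs : 0 < s) (a b y : ℝ) :
    gaussianPDF 0 (1 + s) y * (hd s a y * hd s b y) =
      ENNReal.ofReal (Kr s a b) *
        gaussianPDF ((1 + s) * (a + b) / (s + 2)) (s * (1 + s) / (s + 2)) y := by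
  have hq := gaussianPDFReal_pos 0 (1 + s) y (by positivity)
  have hs' : (0 : ℝ) < s := hs
  simp only [gaussianPDF, hd]
  rw [← ENNReal.ofReal_mul (div_nonneg (gaussianPDFReal_nonneg _ _ _) hq.le),
    ← ENNReal.ofReal_mul hq.le, ← ENNReal.ofReal_mul (by unfold Kr; positivity)]
  congr 1
  have : ∀ p q r : ℝ, q ≠ 0 → q * (p / q * (r / q)) = p * r / q := by
    intros; field_simp
  rw [this _ _ _ hq.ne', div_eq_iff hq.ne']
  simp only [gaussianPDFReal, Kr, NNReal.coe_add, NNReal.coe_one, NNReal.coe_div, NNReal.coe_mul,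
    NNReal.coe_ofNat]
  have e1 : ∀ p r x y : ℝ, (p * Real.exp x) * (r * Real.exp y) = (p * r) * Real.exp (x + y) := by
    intros; rw [Real.exp_add]; ring
  rw [e1, e1, e1]
  congr 1
  · have h1 : (1 + (s:ℝ)) = √((1 + s) ^ 2) := (Real.sqrt_sq (by positivity)).symm
    simp only [← Real.sqrt_inv]
    nth_rw 1 [h1]
    rw [← Real.sqrt_mul (by positivity), ← Real.sqrt_mul (by positivity),
      ← Real.sqrt_mul (by positivity), ← Real.sqrt_mul (by positivity)]
    congr 1
    field_simp
  · congr 1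
    field_simp
    ring

theorem hd_F3 (s : NNReal) (hs : 0 < s) (a b : ℝ) :
    ∫⁻ y, hd s a y * hd s b y ∂(gaussianReal 0 (1 + s)) = ENNReal.ofReal (Kr s a b) := by
  have hm : Measurable (fun y => hd s a y * hd s b y) :=
    (measurable_hd_right s a).mul (measurable_hd_right s b)
  rw [gaussianReal_of_var_ne_zero _ (by positivity),
    lintegral_withDensity_eq_lintegral_mul _ (measurable_gaussianPDF _ _) hm]
  simp only [Pi.mul_apply, gauss_mul_hd_hd s hs]
  rw [lintegral_const_mul _ (measurable_gaussianPDF _ _),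
    lintegral_gaussianPDF_eq_one _ (by positivity), mul_one]

/-- Cyclic shift matrix. -/
def shiftM (R : Type*) [Zero R] [One R] (L : ℕ) (d : Fin L) : Matrix (Fin L) (Fin L) R :=
  Matrix.of fun i j => if j = i + d then 1 else 0

theorem shiftM_mulVec {R : Type*} [NonAssocSemiring R] (L : ℕ) (d : Fin L) (x : Fin L → R) (i : Fin L) :
    (shiftM R L d).mulVec x i = x (i + d) := by
  simp [shiftM, Matrix.mulVec, dotProduct]

theorem shiftM_pow {R : Type*} [CommSemiring R] (L : ℕ) [NeZero L] (d : Fin L) (k : ℕ) :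
    (shiftM R L d) ^ k = shiftM R L (k • d) := by
  induction k with
  | zero =>
    ext i j
    simp [shiftM, Matrix.one_apply, eq_comm]
  | succ k ih =>
    rw [pow_succ, ih]
    ext i j
    rw [Matrix.mul_apply, Finset.sum_eq_single (i + k • d)]
    · simp [shiftM, succ_nsmul, add_assoc]
    · intro b _ hb
      simp [shiftM, hb]
    · simp

theorem shiftM_pow_card {R : Type*} [CommSemiring R] (L : ℕ) [NeZero L] (d : Fin L) :
    (shiftM R L d) ^ L = 1 := by
  rw [shiftM_pow]
  have : L • d = 0 := by
    have := card_nsmul_eq_zero (x := d)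
    simpa using this
  rw [this]
  ext i j
  simp [shiftM, Matrix.one_apply, eq_comm]

theorem shiftM_trace {R : Type*} [CommSemiring R] (L : ℕ) [NeZero L] (d : Fin L) (hd : d ≠ 0) :
    (shiftM R L d).trace = 0 := by
  simp [shiftM, Matrix.trace, hd]

theorem one_sub_lower (t : ℝ) (ht : 0 < t) (ht3 : t ≤ 1/3) (l : ℂ) (hl : ‖l‖ = 1) :
    Real.exp (-(t * l.re) - 4 * t ^ 2) ≤ ‖1 - t * l‖ := by
  have h2 : ‖1 - t * l‖ ^ 2 = 1 - 2 * (t * l.re) + t ^ 2 := by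
    have hl2 : l.re ^ 2 + l.im ^ 2 = 1 := by
      have := Complex.sq_norm l
      rw [hl, Complex.normSq_apply] at this
      nlinarith
    rw [Complex.sq_norm, Complex.normSq_apply]
    simp
    linear_combination t ^ 2 * hl2
  have hre : |l.re| ≤ 1 := hl ▸ Complex.abs_re_le_norm l
  set x := t * l.re with hx
  have hx1 : x ≤ t := by nlinarith [(abs_le.mp hre).2]
  have hx2 : -t ≤ x := by nlinarith [(abs_le.mp hre).1]
  have hD : 0 < 1 - 2 * x + t ^ 2 := by nlinarith
  have hlog := Real.one_sub_inv_le_log_of_pos hD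
  have hk : -(2 * x) - 8 * t ^ 2 ≤ 1 - (1 - 2 * x + t ^ 2)⁻¹ := by
    have : (1 - 2 * x + t ^ 2)⁻¹ ≤ 1 + 2 * x + 8 * t ^ 2 := by
      rw [inv_le_iff_one_le_mul₀ hD]
      nlinarith [mul_nonneg (sub_nonneg.2 hx1) (sub_nonneg.2 hx2), sq_nonneg t,
        mul_nonneg (sq_nonneg t) (sub_nonneg.2 hx1), mul_nonneg (sq_nonneg t) (sub_nonneg.2 ht3),
        sq_nonneg (t^2)]
    linarith
  have hE : Real.exp (-x - 4 * t ^ 2) ^ 2 ≤ ‖1 - t * l‖ ^ 2 := by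
    rw [h2, ← Real.exp_nat_mul, ← Real.le_log_iff_exp_le hD]
    push_cast
    linarith
  exact le_of_sq_le_sq hE (norm_nonneg _)

theorem det_lower (L : ℕ) [NeZero L] (d : Fin L) (hd : d ≠ 0) (s : ℝ) (hs : 2 ≤ s) :
    (1 + s) ^ L * Real.exp (-(4 * L / (1 + s) ^ 2)) ≤
      |((1 + s) • (1 : Matrix (Fin L) (Fin L) ℝ) - shiftM ℝ L d).det| := by
  set A := shiftM ℂ L d with hA
  have hs1 : (0 : ℝ) < 1 + s := by linarith
  have hcard : A.charpoly.roots.card = L := by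
    rw [← (IsAlgClosed.splits A.charpoly).natDegree_eq_card_roots, Matrix.charpoly_natDegree_eq_dim]
    simp
  have hroot : ∀ l ∈ A.charpoly.roots, ‖l‖ = 1 := by
    intro l hl
    have h1 : l ∈ spectrum ℂ A := by
      rw [Matrix.mem_spectrum_iff_isRoot_charpoly]
      exact Polynomial.isRoot_of_mem_roots hl
    have h2 := spectrum.pow_mem_pow A L h1
    rw [hA, shiftM_pow_card, spectrum.one_eq] at h2
    exact Complex.norm_eq_one_of_pow_eq_one h2 (NeZero.ne L)
  have htr : A.charpoly.roots.sum = 0 := by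
    rw [← Matrix.trace_eq_sum_roots_charpoly, hA, shiftM_trace L d hd]
  have hdet : |((1 + s) • (1 : Matrix (Fin L) (Fin L) ℝ) - shiftM ℝ L d).det| =
      ‖A.charpoly.eval ((1 + s : ℝ) : ℂ)‖ := by
    rw [Matrix.eval_charpoly]
    have := RingHom.map_det Complex.ofRealHom ((1 + s) • (1 : Matrix (Fin L) (Fin L) ℝ) - shiftM ℝ L d)
    simp only [Complex.ofRealHom_eq_coe] at this
    rw [← Real.norm_eq_abs, ← Complex.norm_real, this]
    congr 2
    ext i j
    by_cases hij : i = j <;> simp [hA, shiftM, hij] <;> split_ifs <;> simp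
  have hev : A.charpoly.eval ((1 + s : ℝ) : ℂ) =
      (A.charpoly.roots.map (fun l => ((1 + s : ℝ) : ℂ) - l)).prod := by
    have := (IsAlgClosed.splits A.charpoly).eq_prod_roots_of_monic A.charpoly_monic
    conv_lhs => rw [this]
    simp [Polynomial.eval_multiset_prod]
  rw [hdet, hev]
  have key : ∀ m : Multiset ℂ, (∀ l ∈ m, ‖l‖ = 1) →
      (1 + s) ^ m.card * Real.exp (-(m.sum.re / (1 + s)) - 4 * m.card / (1 + s) ^ 2) ≤
      ‖(m.map (fun l => ((1 + s : ℝ) : ℂ) - l)).prod‖ := by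
    intro m
    induction m using Multiset.induction_on with
    | empty => simp
    | cons a m ih =>
      intro h
      have ih' := ih (fun l hl => h l (Multiset.mem_cons_of_mem hl))
      have h1 := one_sub_lower (1 + s)⁻¹ (by positivity)
        (by rw [inv_le_comm₀ hs1 (by norm_num)]; norm_num; linarith) a (h a (Multiset.mem_cons_self _ _))
      have h2 : ‖((1 + s : ℝ) : ℂ) - a‖ = (1 + s) * ‖1 - (((1 + s)⁻¹ : ℝ) : ℂ) * a‖ := by
        have hne : ((1 + s : ℝ) : ℂ) ≠ 0 := by exact_mod_cast hs1.ne'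
        have : ((1 + s : ℝ) : ℂ) - a = ((1 + s : ℝ) : ℂ) * (1 - (((1 + s)⁻¹ : ℝ) : ℂ) * a) := by
          rw [Complex.ofReal_inv, mul_sub, mul_one, ← mul_assoc, mul_inv_cancel₀ hne, one_mul]
        rw [this, norm_mul, Complex.norm_real, Real.norm_of_nonneg hs1.le]
      rw [Multiset.map_cons, Multiset.prod_cons, norm_mul, h2, Multiset.card_cons, Multiset.sum_cons]
      calc _ = ((1 + s) * Real.exp (-((1 + s)⁻¹ * a.re) - 4 * (1 + s)⁻¹ ^ 2)) *
            ((1 + s) ^ m.card * Real.exp (-(m.sum.re / (1 + s)) - 4 * m.card / (1 + s) ^ 2)) := by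
            have : ∀ p q r u : ℝ, (p * q) * (r * u) = (p * r) * (q * u) := by intros; ring
            rw [this, ← Real.exp_add, pow_succ']
            congr 2
            simp only [Complex.add_re]
            push_cast
            field_simp
            ring
        _ ≤ _ := by gcongr
  have := key A.charpoly.roots hroot
  rw [hcard, htr] at this
  refine le_trans (le_of_eq ?_) this
  simp
theorem mi_bound {Ω : Type*} [MeasurableSpace Ω] (ν : Measure Ω) [IsProbabilityMeasure ν]
    (H : Ω → ℝ≥0∞) (hH : Measurable H) [IsProbabilityMeasure (ν.withDensity H)] (B : ℝ) (hB1 : 1 ≤ B)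
    (hB : ∫⁻ p, H p * H p ∂ν ≤ ENNReal.ofReal B) :
    ∫ p, Real.log (((ν.withDensity H).rnDeriv ν) p).toReal ∂(ν.withDensity H) ≤ Real.log B := by
  set μ := ν.withDensity H with hμ
  have hB0 : 0 < B := by linarith
  by_cases hint : Integrable (fun p => Real.log ((μ.rnDeriv ν) p).toReal) μ
  swap
  · rw [integral_undef hint]
    exact Real.log_nonneg hB1
  have hac : μ ≪ ν := withDensity_absolutelyContinuous ν H
  have hr : μ.rnDeriv ν =ᵐ[μ] H := hac.ae_eq (Measure.rnDeriv_withDensity ν hH)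
  have hpos : ∀ᵐ p ∂μ, 0 < μ.rnDeriv ν p := Measure.rnDeriv_pos hac
  have hlt : ∀ᵐ p ∂μ, μ.rnDeriv ν p < ∞ := hac (Measure.rnDeriv_lt_top μ ν)
  have hl : ∫⁻ p, μ.rnDeriv ν p ∂μ ≤ ENNReal.ofReal B := by
    rw [lintegral_congr_ae hr, hμ, lintegral_withDensity_eq_lintegral_mul _ hH hH]
    exact hB
  have hlne : ∫⁻ p, μ.rnDeriv ν p ∂μ ≠ ∞ := (hl.trans_lt ENNReal.ofReal_lt_top).ne
  have hmr := Measure.measurable_rnDeriv μ ν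
  have hi : Integrable (fun p => (μ.rnDeriv ν p).toReal) μ :=
    integrable_toReal_of_lintegral_ne_top hmr.aemeasurable hlne
  have hI : ∫ p, (μ.rnDeriv ν p).toReal ∂μ ≤ B := by
    rw [integral_toReal hmr.aemeasurable hlt]
    exact ENNReal.toReal_le_of_le_ofReal hB0.le hl
  calc _ ≤ ∫ p, (Real.log B - 1 + (μ.rnDeriv ν p).toReal / B) ∂μ := by
        refine integral_mono_ae hint ((integrable_const _).add (hi.div_const B)) ?_
        filter_upwards [hpos, hlt] with p h1 h2
        have h3 : 0 < (μ.rnDeriv ν p).toReal := ENNReal.toReal_pos h1.ne' h2.ne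
        have h4 := Real.log_le_sub_one_of_pos (div_pos h3 hB0)
        rw [Real.log_div h3.ne' hB0.ne'] at h4
        linarith
    _ = Real.log B - 1 + (∫ p, (μ.rnDeriv ν p).toReal ∂μ) / B := by
        rw [integral_add (integrable_const _) (hi.div_const B), integral_div]
        simp
    _ ≤ Real.log B - 1 + 1 := by
        gcongr
        rw [div_le_one hB0]
        exact hI
    _ = _ := by ring

theorem map_fst_dens {α β : Type*} [MeasurableSpace α] [MeasurableSpace β] (γ : Measure α)
    (γ' : Measure β) [SFinite γ] [SFinite γ'] (H : α × β → ℝ≥0∞) (hH : Measurable H)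
    (h1 : ∀ x, ∫⁻ y, H (x, y) ∂γ' = 1) : ((γ.prod γ').withDensity H).map Prod.fst = γ := by
  refine Measure.ext_of_lintegral _ fun f hf => ?_
  have hf' : Measurable fun p : α × β => f p.1 := by fun_prop
  rw [lintegral_map hf measurable_fst, lintegral_withDensity_eq_lintegral_mul _ hH hf',
    lintegral_prod _ (by fun_prop)]
  refine lintegral_congr fun x => ?_
  simp only [Pi.mul_apply]
  rw [lintegral_mul_const _ (by fun_prop), h1, one_mul]

theorem map_snd_dens {α β : Type*} [MeasurableSpace α] [MeasurableSpace β] (γ : Measure α)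
    (γ' : Measure β) [SFinite γ] [SFinite γ'] (H : α × β → ℝ≥0∞) (hH : Measurable H)
    (h1 : ∀ y, ∫⁻ x, H (x, y) ∂γ = 1) : ((γ.prod γ').withDensity H).map Prod.snd = γ' := by
  refine Measure.ext_of_lintegral _ fun f hf => ?_
  have hf' : Measurable fun p : α × β => f p.2 := by fun_prop
  rw [lintegral_map hf measurable_snd, lintegral_withDensity_eq_lintegral_mul _ hH hf',
    lintegral_prod_symm' _ (by fun_prop)]
  refine lintegral_congr fun x => ?_
  simp only [Pi.mul_apply]
  rw [lintegral_mul_const _ (by fun_prop), h1, one_mul]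

/-- Density of the joint law with respect to the product of the marginals. -/
noncomputable def Hd (L : ℕ) (s : NNReal) (p : (Fin L → ℝ) × (Fin L → ℝ)) : ℝ≥0∞ :=
  (L : ℝ≥0∞)⁻¹ * ∑ l : Fin L, ∏ j, hd s (p.1 (j + l)) (p.2 j)

theorem measurable_prod_hd (L : ℕ) (s : NNReal) (l : Fin L) :
    Measurable (fun p : (Fin L → ℝ) × (Fin L → ℝ) => ∏ j, hd s (p.1 (j + l)) (p.2 j)) := by
  refine Finset.measurable_fun_prod _ fun j _ => ?_
  exact (measurable_hd s).comp (f := fun p : (Fin L → ℝ) × (Fin L → ℝ) => (p.1 (j + l), p.2 j))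
    (by fun_prop)

theorem measurable_Hd (L : ℕ) (s : NNReal) : Measurable (Hd L s) := by
  unfold Hd
  exact (Finset.measurable_fun_sum _ fun l _ => measurable_prod_hd L s l).const_mul _

/-- Law of the measurement. -/
noncomputable def outGaussian (L : ℕ) (s : NNReal) : Measure (Fin L → ℝ) :=
  Measure.pi fun _ => gaussianReal 0 (1 + s)

instance (L : ℕ) (s : NNReal) : IsProbabilityMeasure (outGaussian L s) := by
  unfold outGaussian; infer_instance

theorem pi_gauss_dens (L : ℕ) (s : NNReal) (hs : 0 < s) (m : Fin L → ℝ) :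
    Measure.pi (fun j => gaussianReal (m j) s) =
      (outGaussian L s).withDensity (fun y => ∏ j, hd s (m j) (y j)) := by
  have h : ∀ j, gaussianReal (m j) s = (gaussianReal 0 (1 + s)).withDensity (hd s (m j)) :=
    fun j => hd_F1 s hs (m j)
  have : ∀ j, SigmaFinite ((gaussianReal 0 (1 + s)).withDensity (hd s (m j))) := by
    intro j; rw [← h j]; infer_instance
  simp_rw [h]
  exact pi_withDens (fun _ => gaussianReal 0 (1 + s)) (fun j => hd s (m j))
    (fun j => measurable_hd_right s (m j))

theorem map_noise (L : ℕ) (s : NNReal) (σ : ℝ) (hσ : σ ^ 2 = s) (m : Fin L → ℝ) :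
    (stdGaussian L).map (fun z j => m j + σ * z j) = Measure.pi (fun j => gaussianReal (m j) s) := by
  have h : ∀ j, (gaussianReal 0 1).map (fun z => m j + σ * z) = gaussianReal (m j) s := by
    intro j
    have : (fun z => m j + σ * z) = (fun z => m j + z) ∘ (fun z => σ * z) := rfl
    rw [this, ← Measure.map_map (by fun_prop) (by fun_prop), gaussianReal_map_const_mul,
      gaussianReal_map_const_add]
    congr 1
    · ring
    · rw [mul_one]; exact NNReal.eq hσ
  have : ∀ j, SigmaFinite ((gaussianReal 0 1).map (fun z => m j + σ * z)) := by
    intro j; rw [h j]; infer_instance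
  unfold stdGaussian
  rw [Measure.pi_map_pi (f := fun j z => m j + σ * z) (fun j => by fun_prop)]
  simp_rw [h]

theorem joint_eq_s12 (L : ℕ) (s : NNReal) (hs : 0 < s) (σ : ℝ) (hσ : σ ^ 2 = s) :
    mraJoint1 L σ = ((stdGaussian L).prod (outGaussian L s)).withDensity (Hd L s) := by
  have : SFinite (unifFin L) := by unfold unifFin; infer_instance
  refine Measure.ext_of_lintegral _ fun f hf => ?_
  have hm0 : ∀ j : Fin L, Measurable (fun q : (Fin L → ℝ) × (Fin L) => q.1 (j + q.2)) := by
    intro j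
    exact measurable_from_prod_countable_left fun l => by fun_prop
  have hm : Measurable (fun ω : (Fin L → ℝ) × (Fin L) × (Fin L → ℝ) =>
      (ω.1, fun j => ω.1 (j + ω.2.1) + σ * ω.2.2 j)) := by
    refine measurable_fst.prodMk (measurable_pi_lambda _ fun j => ?_)
    refine Measurable.add ?_ (by fun_prop)
    exact (hm0 j).comp (f := fun ω : (Fin L → ℝ) × (Fin L) × (Fin L → ℝ) => (ω.1, ω.2.1)) (by fun_prop)
  have hH := measurable_Hd L s
  unfold mraJoint1
  have hfm : Measurable (fun ω : (Fin L → ℝ) × (Fin L) × (Fin L → ℝ) =>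
      f (ω.1, fun j => ω.1 (j + ω.2.1) + σ * ω.2.2 j)) := hf.comp hm
  rw [lintegral_map hf hm, lintegral_prod _ hfm.aemeasurable,
    lintegral_withDensity_eq_lintegral_mul _ hH hf, lintegral_prod _ (by fun_prop)]
  refine lintegral_congr fun x => ?_
  have hmx : Measurable (fun w : (Fin L) × (Fin L → ℝ) => f (x, fun j => x (j + w.1) + σ * w.2 j)) :=
    (hf.comp hm).comp (f := fun w : (Fin L) × (Fin L → ℝ) => (x, w)) (by fun_prop)
  rw [lintegral_prod _ hmx.aemeasurable]
  have hfx : Measurable fun y => f (x, y) := by fun_prop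
  have hl : ∀ l : Fin L, ∫⁻ z, f (x, fun j => x (j + l) + σ * z j) ∂(stdGaussian L)
      = ∫⁻ y, (∏ j, hd s (x (j + l)) (y j)) * f (x, y) ∂(outGaussian L s) := by
    intro l
    have h2 : Measurable (fun z : Fin L → ℝ => fun j => x (j + l) + σ * z j) := by fun_prop
    rw [← lintegral_map (f := fun y => f (x, y)) hfx h2, map_noise L s σ hσ (fun j => x (j + l)),
      pi_gauss_dens L s hs, lintegral_withDensity_eq_lintegral_mul _ _ hfx]
    · rfl
    · exact (measurable_prod_hd L s l).comp (f := fun y => (x, y)) (by fun_prop)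
  simp only [hl, unifFin, lintegral_smul_measure, lintegral_count, tsum_fintype, Pi.mul_apply, Hd,
    smul_eq_mul]
  have hml : ∀ l : Fin L, Measurable fun y : Fin L → ℝ => (∏ j, hd s (x (j + l)) (y j)) * f (x, y) :=
    fun l => ((measurable_prod_hd L s l).comp (f := fun y => (x, y)) (by fun_prop)).mul hfx
  rw [← lintegral_finsetSum _ (fun l _ => hml l),
    ← lintegral_const_mul _ (Finset.measurable_fun_sum _ fun l _ => hml l)]
  refine lintegral_congr fun y => ?_
  rw [← Finset.sum_mul, mul_assoc]

theorem inv_mul_sum_one (L : ℕ) (hL : L ≠ 0) (g : Fin L → ℝ≥0∞) (hg : ∀ l, g l = 1) :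
    (L : ℝ≥0∞)⁻¹ * ∑ l, g l = 1 := by
  simp only [hg, Finset.sum_const, Finset.card_univ, Fintype.card_fin, nsmul_eq_mul, mul_one]
  exact ENNReal.inv_mul_cancel (by exact_mod_cast hL) (ENNReal.natCast_ne_top L)

theorem Hd_right (L : ℕ) [NeZero L] (s : NNReal) (hs : 0 < s) (x : Fin L → ℝ) :
    ∫⁻ y, Hd L s (x, y) ∂(outGaussian L s) = 1 := by
  have hml : ∀ l : Fin L, Measurable fun y : Fin L → ℝ => ∏ j, hd s (x (j + l)) (y j) :=
    fun l => (measurable_prod_hd L s l).comp (f := fun y => (x, y)) (by fun_prop)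
  simp only [Hd]
  rw [lintegral_const_mul _ (Finset.measurable_fun_sum _ fun l _ => hml l),
    lintegral_finsetSum _ (fun l _ => hml l)]
  refine inv_mul_sum_one L (NeZero.ne L) _ fun l => ?_
  have := pi_gauss_dens L s hs (fun j => x (j + l))
  have h2 : (Measure.pi (fun j => gaussianReal (x (j + l)) s)) Set.univ = 1 := measure_univ
  rw [this, withDensity_apply _ MeasurableSet.univ, Measure.restrict_univ] at h2
  exact h2

theorem Hd_left (L : ℕ) [NeZero L] (s : NNReal) (hs : 0 < s) (y : Fin L → ℝ) :
    ∫⁻ x, Hd L s (x, y) ∂(stdGaussian L) = 1 := by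
  have hml : ∀ l : Fin L, Measurable fun x : Fin L → ℝ => ∏ j, hd s (x (j + l)) (y j) :=
    fun l => (measurable_prod_hd L s l).comp (f := fun x => (x, y)) (by fun_prop)
  simp only [Hd]
  rw [lintegral_const_mul _ (Finset.measurable_fun_sum _ fun l _ => hml l),
    lintegral_finsetSum _ (fun l _ => hml l)]
  refine inv_mul_sum_one L (NeZero.ne L) _ fun l => ?_
  have h : ∀ x : Fin L → ℝ, ∏ j, hd s (x (j + l)) (y j) = ∏ j, hd s (x j) (y (j - l)) := by
    intro x
    rw [← Equiv.prod_comp (Equiv.addRight l) (fun j => hd s (x j) (y (j - l)))]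
    simp
  simp_rw [h]
  unfold stdGaussian
  rw [lintegral_pi_prod (fun _ => gaussianReal 0 1) (fun j a => hd s a (y (j - l)))]
  · simp [hd_F2 s hs]
  · intro i
    exact (measurable_hd s).comp (f := fun a : ℝ => (a, y (i - l))) (by fun_prop)

theorem gauss_Kr1 (s : NNReal) (hs : 0 < s) (a b : ℝ) :
    gaussianPDF 0 1 a * ENNReal.ofReal (Kr s a b) =
      ENNReal.ofReal (1 + s) * gaussianPDF 0 (s * (s + 2)) ((1 + s) * a - b) := by
  have hs' : (0 : ℝ) < s := hs
  simp only [gaussianPDF]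
  rw [← ENNReal.ofReal_mul (gaussianPDFReal_nonneg _ _ _), ← ENNReal.ofReal_mul (by positivity)]
  congr 1
  simp only [gaussianPDFReal, Kr, NNReal.coe_mul,
    NNReal.coe_add, NNReal.coe_ofNat, NNReal.coe_one]
  have e1 : ∀ p r x y : ℝ, (p * Real.exp x) * (r * Real.exp y) = (p * r) * Real.exp (x + y) := by
    intros; rw [Real.exp_add]; ring
  rw [e1]
  conv_rhs => rw [← mul_assoc]
  congr 1
  · rw [mul_left_comm, ← mul_inv, ← Real.sqrt_mul (by positivity)]
    congr 3
    ring
  · congr 1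
    field_simp
    ring

theorem Kr_integral (L : ℕ) [NeZero L] (s : NNReal) (hs : 0 < s) (d : Fin L)
    (hdet : ((1 + (s : ℝ)) • (1 : Matrix (Fin L) (Fin L) ℝ) - shiftM ℝ L d).det ≠ 0) :
    ∫⁻ x, ∏ j, ENNReal.ofReal (Kr s (x j) (x (j + d))) ∂(stdGaussian L) =
      ENNReal.ofReal ((1 + s) ^ L /
        |((1 + (s : ℝ)) • (1 : Matrix (Fin L) (Fin L) ℝ) - shiftM ℝ L d).det|) := by
  set M := (1 + (s : ℝ)) • (1 : Matrix (Fin L) (Fin L) ℝ) - shiftM ℝ L d with hM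
  have hstd : stdGaussian L = (volume : Measure (Fin L → ℝ)).withDensity
      (fun x => ∏ j, gaussianPDF 0 1 (x j)) := by
    have h : gaussianReal 0 1 = volume.withDensity (gaussianPDF 0 1) :=
      gaussianReal_of_var_ne_zero _ one_ne_zero
    have : SigmaFinite (volume.withDensity (gaussianPDF 0 1)) := by rw [← h]; infer_instance
    unfold stdGaussian
    simp_rw [h]
    exact pi_withDens (fun _ => volume) (fun _ => gaussianPDF 0 1) (fun _ => measurable_gaussianPDF _ _)
  have hm1 : Measurable (fun x : Fin L → ℝ => ∏ j, gaussianPDF 0 1 (x j)) :=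
    Finset.measurable_fun_prod _ fun j _ => (measurable_gaussianPDF _ _).comp (measurable_pi_apply j)
  have hm2 : Measurable (fun x : Fin L → ℝ => ∏ j, ENNReal.ofReal (Kr s (x j) (x (j + d)))) := by
    refine Finset.measurable_fun_prod _ fun j _ => ?_
    unfold Kr
    fun_prop
  have hm3 : Measurable (fun x : Fin L → ℝ => ∏ j, gaussianPDF 0 (s * (s + 2)) (x j)) :=
    Finset.measurable_fun_prod _ fun j _ => (measurable_gaussianPDF _ _).comp (measurable_pi_apply j)
  rw [hstd, lintegral_withDensity_eq_lintegral_mul _ hm1 hm2]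
  have hpt : ∀ x : Fin L → ℝ, ((fun x : Fin L → ℝ => ∏ j, gaussianPDF 0 1 (x j)) *
      fun x : Fin L → ℝ => ∏ j, ENNReal.ofReal (Kr s (x j) (x (j + d)))) x = ENNReal.ofReal (1 + s) ^ L *
        ∏ j, gaussianPDF 0 (s * (s + 2)) (Matrix.toLin' M x j) := by
    intro x
    have hj : ∀ j, Matrix.toLin' M x j = (1 + s) * x j - x (j + d) := by
      intro j
      rw [Matrix.toLin'_apply, hM, Matrix.sub_mulVec, Pi.sub_apply, shiftM_mulVec, Matrix.smul_mulVec,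
        Matrix.one_mulVec]
      rfl
    simp only [Pi.mul_apply, hj]
    rw [← Finset.prod_mul_distrib]
    simp only [gauss_Kr1 s hs, Finset.prod_mul_distrib, Finset.prod_const, Finset.card_univ,
      Fintype.card_fin]
  have hmL : Measurable (Matrix.toLin' M) :=
    (LinearMap.continuous_of_finiteDimensional (Matrix.toLin' M)).measurable
  have hm4 : Measurable (fun x : Fin L → ℝ =>
      ∏ j, gaussianPDF 0 (s * (s + 2)) (Matrix.toLin' M x j)) := hm3.comp hmL
  rw [lintegral_congr hpt, lintegral_const_mul _ hm4,
    ← lintegral_map (f := fun x : Fin L → ℝ => ∏ j, gaussianPDF 0 (s * (s + 2)) (x j)) hm3 hmL,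
    Real.map_matrix_volume_pi_eq_smul_volume_pi hdet, lintegral_smul_measure, volume_pi,
    lintegral_pi_prod (fun _ => volume) (fun _ => gaussianPDF 0 (s * (s + 2)))
      (fun _ => measurable_gaussianPDF _ _)]
  simp only [lintegral_gaussianPDF_eq_one 0 (v := s * (s + 2)) (by positivity), Finset.prod_const_one,
    smul_eq_mul, mul_one]
  rw [← ENNReal.ofReal_pow (by positivity), ← ENNReal.ofReal_mul (by positivity), abs_inv,
    div_eq_mul_inv]

theorem pair_integral (L : ℕ) [NeZero L] (s : NNReal) (hs : 0 < s) (l l' : Fin L) :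
    ∫⁻ x, ∫⁻ y, (∏ j, hd s (x (j + l)) (y j)) * (∏ j, hd s (x (j + l')) (y j))
      ∂(outGaussian L s) ∂(stdGaussian L) =
    ∫⁻ x, ∏ j, ENNReal.ofReal (Kr s (x j) (x (j + (l' - l)))) ∂(stdGaussian L) := by
  refine lintegral_congr fun x => ?_
  simp only [← Finset.prod_mul_distrib]
  unfold outGaussian
  rw [lintegral_pi_prod (fun _ => gaussianReal 0 (1 + s))
    (fun j y => hd s (x (j + l)) y * hd s (x (j + l')) y)
    (fun j => (measurable_hd_right _ _).mul (measurable_hd_right _ _))]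
  simp only [hd_F3 s hs]
  rw [← Equiv.prod_comp (Equiv.addRight l)
    (fun j => ENNReal.ofReal (Kr s (x j) (x (j + (l' - l)))))]
  refine Finset.prod_congr rfl fun j _ => ?_
  have : j + l + (l' - l) = j + l' := by abel
  simp [this]

theorem pair_diag (L : ℕ) [NeZero L] (s : NNReal) (hs : 0 < s) :
    ∫⁻ x, ∏ j, ENNReal.ofReal (Kr s (x j) (x (j + 0))) ∂(stdGaussian L) ≤
      ENNReal.ofReal (Real.exp (L / s)) := by
  have hs' : (0 : ℝ) < s := hs
  have hd : ((1 + (s : ℝ)) • (1 : Matrix (Fin L) (Fin L) ℝ) - shiftM ℝ L 0).det = (s : ℝ) ^ L := by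
    have h1 : shiftM ℝ L 0 = 1 := by
      ext i j
      simp [shiftM, Matrix.one_apply, eq_comm]
    have h2 : (1 + (s : ℝ)) • (1 : Matrix (Fin L) (Fin L) ℝ) - 1 = (s : ℝ) • 1 := by
      rw [add_smul, one_smul, add_sub_cancel_left]
    rw [h1, h2, Matrix.det_smul]
    simp
  rw [Kr_integral L s hs 0 (by rw [hd]; positivity), hd]
  apply ENNReal.ofReal_le_ofReal
  rw [abs_of_pos (by positivity), ← div_pow]
  have h3 : (1 + (s : ℝ)) / s ≤ Real.exp (1 / s) := by
    have := Real.add_one_le_exp (1 / (s : ℝ))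
    calc _ = 1 / (s : ℝ) + 1 := by field_simp
      _ ≤ _ := this
  calc _ ≤ Real.exp (1 / s) ^ L := by gcongr
    _ = _ := by rw [← Real.exp_nat_mul]; congr 1; ring

theorem pair_off (L : ℕ) [NeZero L] (s : NNReal) (hs : 2 ≤ s) (d : Fin L) (hd : d ≠ 0) :
    ∫⁻ x, ∏ j, ENNReal.ofReal (Kr s (x j) (x (j + d))) ∂(stdGaussian L) ≤
      ENNReal.ofReal (Real.exp (4 * L / s ^ 2)) := by
  have hs2 : (2 : ℝ) ≤ s := by exact_mod_cast hs
  have hs' : (0 : ℝ) < s := by linarith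
  have hlow := det_lower L d hd s hs2
  have hpos : 0 < |((1 + (s : ℝ)) • (1 : Matrix (Fin L) (Fin L) ℝ) - shiftM ℝ L d).det| :=
    lt_of_lt_of_le (by positivity) hlow
  rw [Kr_integral L s (lt_of_lt_of_le (by norm_num) hs) d (abs_pos.mp hpos)]
  apply ENNReal.ofReal_le_ofReal
  rw [div_le_iff₀ hpos]
  calc (1 + (s : ℝ)) ^ L = Real.exp (4 * L / (1 + s) ^ 2) *
        ((1 + s) ^ L * Real.exp (-(4 * L / (1 + (s:ℝ)) ^ 2))) := by
        rw [mul_left_comm, ← Real.exp_add, add_neg_cancel, Real.exp_zero, mul_one]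
    _ ≤ Real.exp (4 * L / s ^ 2) *
        |((1 + (s : ℝ)) • (1 : Matrix (Fin L) (Fin L) ℝ) - shiftM ℝ L d).det| := by
        gcongr
        linarith

theorem second_moment (L : ℕ) [NeZero L] (s : NNReal) (hs : 2 ≤ s) :
    ∫⁻ p, Hd L s p * Hd L s p ∂((stdGaussian L).prod (outGaussian L s)) ≤
      ENNReal.ofReal ((L : ℝ)⁻¹ * Real.exp (L / s) + Real.exp (4 * L / s ^ 2)) := by
  have hs0 : 0 < s := lt_of_lt_of_le (by norm_num) hs
  have hL0 : (L : ℝ≥0∞) ≠ 0 := by exact_mod_cast NeZero.ne L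
  have hLt : (L : ℝ≥0∞) ≠ ∞ := ENNReal.natCast_ne_top L
  have hmll : ∀ l l' : Fin L, Measurable (fun p : (Fin L → ℝ) × (Fin L → ℝ) =>
      (∏ j, hd s (p.1 (j + l)) (p.2 j)) * ∏ j, hd s (p.1 (j + l')) (p.2 j)) :=
    fun l l' => (measurable_prod_hd L s l).mul (measurable_prod_hd L s l')
  have hexp : ∀ p, Hd L s p * Hd L s p = ((L : ℝ≥0∞)⁻¹ * (L : ℝ≥0∞)⁻¹) * ∑ l : Fin L, ∑ l' : Fin L,
      (∏ j, hd s (p.1 (j + l)) (p.2 j)) * ∏ j, hd s (p.1 (j + l')) (p.2 j) := by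
    intro p
    simp only [Hd]
    rw [mul_mul_mul_comm, Finset.sum_mul_sum]
  set E1 := ENNReal.ofReal (Real.exp (L / s)) with hE1
  set E2 := ENNReal.ofReal (Real.exp (4 * L / s ^ 2)) with hE2
  have hterm : ∀ l l' : Fin L, ∫⁻ p, (∏ j, hd s (p.1 (j + l)) (p.2 j)) *
      ∏ j, hd s (p.1 (j + l')) (p.2 j) ∂((stdGaussian L).prod (outGaussian L s)) ≤
      (if l = l' then E1 else 0) + E2 := by
    intro l l'
    rw [lintegral_prod _ (hmll l l').aemeasurable, pair_integral L s hs0 l l']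
    by_cases h : l = l'
    · subst h
      rw [sub_self, if_pos rfl]
      exact (pair_diag L s hs0).trans le_self_add
    · rw [if_neg h, zero_add]
      exact pair_off L s hs _ (sub_ne_zero.2 (Ne.symm h))
  rw [lintegral_congr hexp, lintegral_const_mul _ (Finset.measurable_fun_sum _ fun l _ =>
      Finset.measurable_fun_sum _ fun l' _ => hmll l l'),
    lintegral_finsetSum _ (fun l _ => Finset.measurable_fun_sum _ fun l' _ => hmll l l')]
  have hsum : ∀ l : Fin L, ∫⁻ p, ∑ l' : Fin L, (∏ j, hd s (p.1 (j + l)) (p.2 j)) *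
      ∏ j, hd s (p.1 (j + l')) (p.2 j) ∂((stdGaussian L).prod (outGaussian L s)) ≤ E1 + L * E2 := by
    intro l
    rw [lintegral_finsetSum _ (fun l' _ => hmll l l')]
    refine (Finset.sum_le_sum fun l' _ => hterm l l').trans (le_of_eq ?_)
    rw [Finset.sum_add_distrib]
    simp
  calc _ ≤ ((L : ℝ≥0∞)⁻¹ * (L : ℝ≥0∞)⁻¹) * ∑ l : Fin L, (E1 + L * E2) := by
        gcongr with l; exact hsum l
    _ = (L : ℝ≥0∞)⁻¹ * E1 + E2 := by
        rw [Finset.sum_const, Finset.card_univ, Fintype.card_fin, nsmul_eq_mul]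
        calc _ = (L : ℝ≥0∞)⁻¹ * ((L : ℝ≥0∞)⁻¹ * L) * (E1 + L * E2) := by ring
          _ = (L : ℝ≥0∞)⁻¹ * E1 + ((L : ℝ≥0∞)⁻¹ * L) * E2 := by
            rw [ENNReal.inv_mul_cancel hL0 hLt]; ring_nf
            rw [ENNReal.inv_mul_cancel hL0 hLt, one_mul]
          _ = _ := by rw [ENNReal.inv_mul_cancel hL0 hLt, one_mul]
    _ = _ := by
        have hLp : (0 : ℝ) < L := by exact_mod_cast Nat.pos_of_ne_zero (NeZero.ne L)
        rw [ENNReal.ofReal_add (by positivity) (by positivity), ENNReal.ofReal_mul (by positivity),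
          ENNReal.ofReal_inv_of_pos hLp, ENNReal.ofReal_natCast]

theorem isProb_joint (L : ℕ) [NeZero L] (s : NNReal) (hs : 0 < s) :
    IsProbabilityMeasure (((stdGaussian L).prod (outGaussian L s)).withDensity (Hd L s)) := by
  constructor
  have h := map_fst_dens (stdGaussian L) (outGaussian L s) (Hd L s) (measurable_Hd L s)
    (Hd_right L s hs)
  have h2 : (stdGaussian L) Set.univ = 1 := measure_univ
  rw [← h, Measure.map_apply measurable_fst MeasurableSet.univ] at h2
  exact h2

theorem mutualInfo_eq (L : ℕ) [NeZero L] (s : NNReal) (hs : 0 < s) (σ : ℝ) (hσ : σ ^ 2 = s) :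
    mutualInfo (mraJoint1 L σ) =
      ∫ p, Real.log (((((stdGaussian L).prod (outGaussian L s)).withDensity (Hd L s)).rnDeriv
        ((stdGaussian L).prod (outGaussian L s))) p).toReal
        ∂(((stdGaussian L).prod (outGaussian L s)).withDensity (Hd L s)) := by
  unfold mutualInfo
  rw [joint_eq_s12 L s hs σ hσ,
    map_fst_dens (stdGaussian L) (outGaussian L s) (Hd L s) (measurable_Hd L s) (Hd_right L s hs),
    map_snd_dens (stdGaussian L) (outGaussian L s) (Hd L s) (measurable_Hd L s) (Hd_left L s hs)]

theorem mutualInfo_nonneg (L : ℕ) (hL : 2 ≤ L) (σ : ℝ) (h2 : 2 < σ ^ 2) :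
    0 ≤ mutualInfo (mraJoint1 L σ) := by
  have : NeZero L := ⟨by omega⟩
  let s : NNReal := ⟨σ ^ 2, sq_nonneg σ⟩
  have hs : 0 < s := by
    have : (0 : ℝ) < s := by show 0 < σ ^ 2; linarith
    exact_mod_cast this
  rw [mutualInfo_eq L s hs σ rfl]
  have hp := isProb_joint L s hs
  have := InformationTheory.toReal_klDiv_of_measure_eq
    (withDensity_absolutelyContinuous ((stdGaussian L).prod (outGaussian L s)) (Hd L s))
    (by rw [measure_univ, measure_univ])
  unfold llr at this
  rw [← this]
  exact ENNReal.toReal_nonneg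

theorem mutualInfo_le (L : ℕ) (hL : 2 ≤ L) (σ : ℝ) (h2 : 2 < σ ^ 2) :
    mutualInfo (mraJoint1 L σ) ≤
        Real.log (1 + (L : ℝ)⁻¹ * Real.exp ((L : ℝ) / σ ^ 2)) + 4 * L / σ ^ 4 := by
  have : NeZero L := ⟨by omega⟩
  have hLp : (0 : ℝ) < L := by exact_mod_cast (by omega : 0 < L)
  let s : NNReal := ⟨σ ^ 2, sq_nonneg σ⟩
  have hsv : (s : ℝ) = σ ^ 2 := rfl
  have hs2 : 2 ≤ s := by
    have : (2 : ℝ) ≤ s := by rw [hsv]; linarith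
    exact_mod_cast this
  have hs : 0 < s := lt_of_lt_of_le (by norm_num) hs2
  have hp := isProb_joint L s hs
  rw [mutualInfo_eq L s hs σ rfl]
  have h4 : σ ^ 4 = (s : ℝ) ^ 2 := by rw [hsv]; ring
  rw [h4, ← hsv]
  have hge : 1 ≤ Real.exp (4 * L / (s : ℝ) ^ 2) := Real.one_le_exp (by positivity)
  have ha : 0 ≤ (L : ℝ)⁻¹ * Real.exp ((L : ℝ) / s) := by positivity
  have hb := mi_bound ((stdGaussian L).prod (outGaussian L s)) (Hd L s) (measurable_Hd L s)
    ((1 + (L : ℝ)⁻¹ * Real.exp ((L : ℝ) / s)) * Real.exp (4 * L / (s : ℝ) ^ 2))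
    (by nlinarith)
    ((second_moment L s hs2).trans (ENNReal.ofReal_le_ofReal (by nlinarith)))
  rwa [Real.log_mul (by positivity) (by positivity), Real.log_exp] at hb

theorem sigmaAlpha_sq (L : ℕ) (hL : 2 ≤ L) (α : ℝ) (hα : 0 < α) :
    sigmaAlpha L α ^ 2 = (L : ℝ) / (α * Real.log L) := by
  have : 0 ≤ Real.log (L : ℝ) := Real.log_natCast_nonneg L
  unfold sigmaAlpha
  rw [Real.sq_sqrt (by positivity)]

theorem eventually_bound (α : ℝ) (hα : 0 < α) :
    ∀ᶠ L : ℕ in atTop, 0 ≤ mutualInfo (mraJoint1 L (sigmaAlpha L α)) ∧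
      mutualInfo (mraJoint1 L (sigmaAlpha L α)) / (L : ℝ) ^ (α - 1) ≤
        1 + 4 * α ^ 2 * (Real.log L ^ (2 : ℝ) / (L : ℝ) ^ α) := by
  have hlog : ∀ᶠ x : ℝ in atTop, ‖Real.log x‖ ≤ (1 / (4 * α)) * ‖x‖ :=
    Real.isLittleO_log_id_atTop.bound (by positivity)
  have hlog' := tendsto_natCast_atTop_atTop.eventually hlog
  filter_upwards [hlog', eventually_ge_atTop 2] with L h1 hL
  have hLp : (0 : ℝ) < L := by exact_mod_cast (by omega : 0 < L)
  have hL1 : (1 : ℝ) < L := by exact_mod_cast (by omega : 1 < L)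
  have hlp : 0 < Real.log (L : ℝ) := Real.log_pos hL1
  rw [Real.norm_of_nonneg hlp.le, Real.norm_of_nonneg hLp.le] at h1
  have hsq := sigmaAlpha_sq L hL α hα
  have h2 : 2 < sigmaAlpha L α ^ 2 := by
    rw [hsq, lt_div_iff₀ (by positivity)]
    have : α * Real.log L ≤ α * (1 / (4 * α) * L) := by gcongr
    have h3 : α * (1 / (4 * α) * L) = L / 4 := by field_simp
    linarith
  refine ⟨mutualInfo_nonneg L hL _ h2, ?_⟩
  have hle := mutualInfo_le L hL _ h2
  have h4 : sigmaAlpha L α ^ 4 = ((L : ℝ) / (α * Real.log L)) ^ 2 := by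
    rw [← hsq]; ring
  rw [h4, hsq] at hle
  have e1 : (L : ℝ) / (L / (α * Real.log L)) = Real.log L * α := by
    field_simp
  rw [e1, ← Real.rpow_def_of_pos hLp] at hle
  have e2 : (L : ℝ)⁻¹ * (L : ℝ) ^ α = (L : ℝ) ^ (α - 1) := by
    rw [Real.rpow_sub_one hLp.ne']; ring
  rw [e2] at hle
  have hrp : 0 < (L : ℝ) ^ (α - 1) := Real.rpow_pos_of_pos hLp _
  have hl := Real.log_le_sub_one_of_pos (by linarith : 0 < 1 + (L : ℝ) ^ (α - 1))
  rw [div_le_iff₀ hrp]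
  have hap : 0 < (L : ℝ) ^ α := Real.rpow_pos_of_pos hLp _
  have e3 : (1 + 4 * α ^ 2 * (Real.log L ^ (2 : ℝ) / (L : ℝ) ^ α)) * (L : ℝ) ^ (α - 1) =
      (L : ℝ) ^ (α - 1) + 4 * L / ((L : ℝ) / (α * Real.log L)) ^ 2 := by
    rw [Real.rpow_sub_one hLp.ne', Real.rpow_two]
    field_simp
  rw [e3]
  linarith

theorem tendsto_bound (α : ℝ) (hα : 0 < α) :
    Tendsto (fun L : ℕ => 1 + 4 * α ^ 2 * (Real.log L ^ (2 : ℝ) / (L : ℝ) ^ α)) atTop (nhds 1) := by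
  have h := (isLittleO_log_rpow_rpow_atTop (2 : ℝ) hα).tendsto_div_nhds_zero
  have h' := h.comp tendsto_natCast_atTop_atTop
  have h2 := (h'.const_mul (4 * α ^ 2)).const_add 1
  simpa using h2

/-- mutual information upper bound at very low SNR. There is `C > 0` such
that for all `L ≥ 2` and `σ² > 2`, `I(X;Y) ≤ log(1 + L⁻¹·e^{L/σ²}) + C·L/σ⁴`.
In particular, with `σ² = L/(α log L)` and `0 < α < 1` fixed,
`limsup_{L→∞} I(X;Y)/L^{α−1} ≤ 1`, so `I(X;Y) → 0`. -/
theorem mutual_info_very_low_snr :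
    (∃ C : ℝ, 0 < C ∧ ∀ L : ℕ, 2 ≤ L → ∀ σ : ℝ, 2 < σ ^ 2 →
      mutualInfo (mraJoint1 L σ) ≤
        Real.log (1 + (L : ℝ)⁻¹ * Real.exp ((L : ℝ) / σ ^ 2)) + C * L / σ ^ 4) ∧
    ∀ α : ℝ, 0 < α → α < 1 →
      Filter.limsup (fun L : ℕ =>
          mutualInfo (mraJoint1 L (sigmaAlpha L α)) / (L : ℝ) ^ (α - 1)) atTop ≤ 1 ∧
      Tendsto (fun L : ℕ => mutualInfo (mraJoint1 L (sigmaAlpha L α))) atTop (nhds 0) := by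
  refine ⟨⟨4, by norm_num, fun L hL σ hσ => mutualInfo_le L hL σ hσ⟩, fun α hα hα1 => ?_⟩
  have hb := eventually_bound α hα
  have ht := tendsto_bound α hα
  refine ⟨?_, ?_⟩
  · refine le_trans ?_ ht.limsup_eq.le
    refine limsup_le_limsup (hb.mono fun L h => h.2) ?_ ht.isBoundedUnder_le
    refine IsBoundedUnder.isCoboundedUnder_le ⟨0, ?_⟩
    rw [eventually_map]
    exact hb.mono fun L h => div_nonneg h.1 (Real.rpow_nonneg (Nat.cast_nonneg L) _)
  · have hr : Tendsto (fun L : ℕ => (L : ℝ) ^ (α - 1)) atTop (nhds 0) := by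
      have h := (tendsto_rpow_neg_atTop (sub_pos.2 hα1)).comp tendsto_natCast_atTop_atTop
      refine h.congr fun L => ?_
      simp only [Function.comp, neg_sub]
    have hp := ht.mul hr
    rw [mul_zero] at hp
    refine tendsto_of_tendsto_of_tendsto_of_le_of_le' tendsto_const_nhds hp (hb.mono fun L h => h.1) ?_
    filter_upwards [hb, eventually_ge_atTop 1] with L h hL
    have hLp : (0 : ℝ) < L := by exact_mod_cast hL
    exact (div_le_iff₀ (Real.rpow_pos_of_pos hLp _)).1 h.2

end MRAformal
end
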